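/- arXiv:2408.17232 — 2 statements merged into one kernel-verified Lean document; each statement's English description precedes it below -/
import Mathlib

section
/- For each fixed integer k ≥ 1, as n → ∞ the number R_{n,k} of crystallized diagrams with n chords and exactly k short chords satisfies R_{n,k} / [ (k+1)^{−1/2} · 2^{n+1/2} · e^{k−n} · k^{n−k/2} · π^{k/2} · ((n−k)/(k+1))^{n−k/2} ] → 1. -/
namespace ChordBubbles

/-- A linear chord diagram with `n` chords: a fixed-point-free involution of `Fin (2*n)`. -/
def IsDiagram (n : ℕ) (f : Equiv.Perm (Fin (2 * n))) : Prop :=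
  (∀ i, f (f i) = i) ∧ ∀ i, f i ≠ i

/-- Vertex `i` is an endpoint of a short chord (a chord joining adjacent vertices). -/
def ShortEnd (n : ℕ) (f : Equiv.Perm (Fin (2 * n))) (i : Fin (2 * n)) : Prop :=
  (f i).val = i.val + 1 ∨ (f i).val + 1 = i.val

/-- `[a, b]` delimits a bubble: a maximal nonempty interval of vertices none of which is an
endpoint of a short chord. -/
def IsBubble (n : ℕ) (f : Equiv.Perm (Fin (2 * n))) (a b : ℕ) : Prop :=
  a ≤ b ∧ b < 2 * n ∧
  (∀ i : Fin (2 * n), a ≤ i.val → i.val ≤ b → ¬ ShortEnd n f i) ∧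
  (a = 0 ∨ ∃ j : Fin (2 * n), j.val + 1 = a ∧ ShortEnd n f j) ∧
  (b + 1 = 2 * n ∨ ∃ j : Fin (2 * n), j.val = b + 1 ∧ ShortEnd n f j)

/-- The size (number of vertices) of the bubble `[a, b]`. -/
def bubbleSize (a b : ℕ) : ℕ := b + 1 - a

/-- The number of bridges of the bubble `[a, b]` under the diagram `f`: the number of chords
joining a vertex inside the bubble to one outside it. -/
noncomputable def bridges (n : ℕ) (f : Equiv.Perm (Fin (2 * n))) (a b : ℕ) : ℕ :=
  Nat.card {i : Fin (2 * n) // (a ≤ i.val ∧ i.val ≤ b) ∧ ¬ (a ≤ (f i).val ∧ (f i).val ≤ b)}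

/-- `N n q b` : the number of pairs (diagram, bubble) where the diagram has `n` chords and the
bubble has size `q` and exactly `b` bridges. -/
noncomputable def N (n q b : ℕ) : ℕ :=
  Nat.card {p : Equiv.Perm (Fin (2 * n)) × ℕ × ℕ //
    IsDiagram n p.1 ∧ IsBubble n p.1 p.2.1 p.2.2 ∧
    bubbleSize p.2.1 p.2.2 = q ∧ bridges n p.1 p.2.1 p.2.2 = b}

/-- A diagram is crystallized when all its bubbles are empty, i.e., no chord joins two vertices
lying in the same bubble. -/
def Crystallized (n : ℕ) (f : Equiv.Perm (Fin (2 * n))) : Prop :=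
  ∀ a b, IsBubble n f a b → ∀ i : Fin (2 * n),
    a ≤ i.val → i.val ≤ b → ¬ (a ≤ (f i).val ∧ (f i).val ≤ b)

/-- The number of short chords of a diagram. -/
noncomputable def shortChords (n : ℕ) (f : Equiv.Perm (Fin (2 * n))) : ℕ :=
  Nat.card {i : Fin (2 * n) // (f i).val = i.val + 1}

/-- `R n k` : the number of crystallized diagrams with `n` chords, exactly `k` of them short. -/
noncomputable def R (n k : ℕ) : ℕ :=
  Nat.card {f : Equiv.Perm (Fin (2 * n)) //
    IsDiagram n f ∧ Crystallized n f ∧ shortChords n f = k}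

section Comb
open Finset

/-- number of vertices of color at most `j` -/
def dcount {m k : ℕ} (c : Fin (2 * m) →o Fin (k + 1)) (j : ℕ) : ℕ :=
  (univ.filter (fun i => (c i).val ≤ j)).card

lemma lt_dcount {m k : ℕ} (c : Fin (2 * m) →o Fin (k + 1)) (j : ℕ) (i : Fin (2 * m)) :
    i.val < dcount c j ↔ (c i).val ≤ j := by
  constructor
  · intro h
    by_contra hc
    have : (univ.filter (fun i => (c i).val ≤ j)) ⊆ Finset.Iio i := by
      intro x hx
      simp only [mem_filter, mem_univ, true_and] at hx
      rw [Finset.mem_Iio]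
      by_contra hxi
      have := c.monotone (not_lt.mp hxi)
      have : (c i).val ≤ (c x).val := this
      omega
    have := Finset.card_le_card this
    rw [Fin.card_Iio] at this
    unfold dcount at h
    omega
  · intro h
    have : Finset.Iic i ⊆ (univ.filter (fun i => (c i).val ≤ j)) := by
      intro x hx
      rw [Finset.mem_Iic] at hx
      have : (c x).val ≤ (c i).val := c.monotone hx
      simp only [mem_filter, mem_univ, true_and]
      omega
    have := Finset.card_le_card this
    rw [Fin.card_Iic] at this
    unfold dcount
    omega

lemma dcount_le {m k : ℕ} (c : Fin (2 * m) →o Fin (k + 1)) (j : ℕ) : dcount c j ≤ 2 * m := by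
  unfold dcount
  exact (Finset.card_le_univ _).trans (by simp)

lemma dcount_mono {m k : ℕ} (c : Fin (2 * m) →o Fin (k + 1)) {j j' : ℕ} (h : j ≤ j') :
    dcount c j ≤ dcount c j' := by
  unfold dcount
  apply Finset.card_le_card
  intro x hx
  simp only [mem_filter, mem_univ, true_and] at hx ⊢
  omega

def posn {m k : ℕ} (c : Fin (2 * m) →o Fin (k + 1)) : Fin (2 * m) ⊕ Fin k × Bool → ℕ
  | Sum.inl i => i.val + 2 * (c i).val
  | Sum.inr (j, b) => dcount c j.val + 2 * j.val + b.toNat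

lemma posn_lt {m k : ℕ} (c : Fin (2 * m) →o Fin (k + 1)) (x) : posn c x < 2 * (m + k) := by
  rcases x with i | ⟨j, b⟩
  · have := (c i).2
    have := i.2
    simp only [posn]; omega
  · have := dcount_le c j.val
    have := j.2
    have := Bool.toNat_le b
    simp only [posn]; omega

lemma posn_strict {m k : ℕ} (c : Fin (2 * m) →o Fin (k + 1)) {i i' : Fin (2 * m)} (h : i < i') :
    posn c (Sum.inl i) < posn c (Sum.inl i') := by
  have h1 : (c i).val ≤ (c i').val := c.monotone h.le
  have : i.val < i'.val := h
  simp only [posn]; omega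

lemma posn_inj {m k : ℕ} (c : Fin (2 * m) →o Fin (k + 1)) : Function.Injective (posn c) := by
  intro x y h
  rcases x with i | ⟨j, b⟩ <;> rcases y with i' | ⟨j', b'⟩
  · rcases lt_trichotomy i i' with hl | hl | hl
    · have := posn_strict c hl; omega
    · rw [hl]
    · have := posn_strict c hl; omega
  · exfalso
    have := lt_dcount c j'.val i
    have := Bool.toNat_le b'
    simp only [posn] at h
    by_cases hc : (c i).val ≤ j'.val
    · omega
    · omega
  · exfalso
    have := lt_dcount c j.val i'
    have := Bool.toNat_le b
    simp only [posn] at h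
    by_cases hc : (c i').val ≤ j.val
    · omega
    · omega
  · have := Bool.toNat_le b'
    have := Bool.toNat_le b
    simp only [posn] at h
    rcases lt_trichotomy j.val j'.val with hl | hl | hl
    · have := dcount_mono c hl.le
      omega
    · have hj : j = j' := Fin.ext hl
      subst hj
      have : b.toNat = b'.toNat := by omega
      have : b = b' := by cases b <;> cases b' <;> simp_all
      rw [this]
    · have := dcount_mono c hl.le
      omega

noncomputable def eqv {m k : ℕ} (c : Fin (2 * m) →o Fin (k + 1)) :
    Fin (2 * m) ⊕ Fin k × Bool ≃ Fin (2 * (m + k)) :=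
  Equiv.ofBijective (fun x => ⟨posn c x, posn_lt c x⟩) (by
    rw [Fintype.bijective_iff_injective_and_card]
    refine ⟨fun x y h => posn_inj c (by simpa using h), ?_⟩
    simp; ring)

lemma eqv_val {m k : ℕ} (c : Fin (2 * m) →o Fin (k + 1)) (x) : (eqv c x).val = posn c x := rfl

noncomputable def build {m k : ℕ} (c : Fin (2 * m) →o Fin (k + 1)) (h : Equiv.Perm (Fin (2 * m))) :
    Equiv.Perm (Fin (2 * (m + k))) :=
  (eqv c).symm.trans ((Equiv.sumCongr h (Equiv.prodCongr (Equiv.refl _) Equiv.boolNot)).trans (eqv c))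

lemma build_inl {m k : ℕ} (c : Fin (2 * m) →o Fin (k + 1)) (h) (i) :
    build c h (eqv c (Sum.inl i)) = eqv c (Sum.inl (h i)) := by
  simp [build]

lemma build_inr {m k : ℕ} (c : Fin (2 * m) →o Fin (k + 1)) (h) (j b) :
    build c h (eqv c (Sum.inr (j, b))) = eqv c (Sum.inr (j, !b)) := by
  simp [build]

def Good {m k : ℕ} (c : Fin (2 * m) →o Fin (k + 1)) (h : Equiv.Perm (Fin (2 * m))) : Prop :=
  IsDiagram m h ∧ ∀ i, c (h i) ≠ c i

lemma build_diag {m k : ℕ} {c : Fin (2 * m) →o Fin (k + 1)} {h} (hg : Good c h) :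
    IsDiagram (m + k) (build c h) := by
  constructor
  · intro v
    obtain ⟨x, rfl⟩ := (eqv c).surjective v
    rcases x with i | ⟨j, b⟩
    · rw [build_inl, build_inl, hg.1.1]
    · rw [build_inr, build_inr, Bool.not_not]
  · intro v
    obtain ⟨x, rfl⟩ := (eqv c).surjective v
    rcases x with i | ⟨j, b⟩
    · rw [build_inl]
      intro hh
      exact hg.1.2 i (Sum.inl.inj ((eqv c).injective hh))
    · rw [build_inr]
      intro hh
      have := (eqv c).injective hh
      simp at this

lemma build_far {m k : ℕ} {c : Fin (2 * m) →o Fin (k + 1)} {i i' : Fin (2 * m)}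
    (h : (c i).val < (c i').val) : ∃ j : Fin k, posn c (Sum.inl i) < posn c (Sum.inr (j, false)) ∧
      posn c (Sum.inr (j, false)) + 1 < posn c (Sum.inl i') := by
  have := (c i').2
  refine ⟨⟨(c i).val, by omega⟩, ?_⟩
  have h1 := lt_dcount c (c i).val i
  have h2 := lt_dcount c (c i).val i'
  simp only [posn, Bool.toNat_false]
  omega

lemma build_short_inr {m k : ℕ} (c : Fin (2 * m) →o Fin (k + 1)) (h) (x) :
    ShortEnd (m + k) (build c h) (eqv c (Sum.inr x)) := by
  obtain ⟨j, b⟩ := x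
  unfold ShortEnd
  rw [build_inr, eqv_val, eqv_val]
  cases b <;> simp [posn]

lemma build_nshort_inl {m k : ℕ} {c : Fin (2 * m) →o Fin (k + 1)} {h} (hg : Good c h) (i) :
    ¬ ShortEnd (m + k) (build c h) (eqv c (Sum.inl i)) := by
  unfold ShortEnd
  rw [build_inl, eqv_val, eqv_val]
  have h1 := hg.2 i
  have h1 : (c (h i)).val ≠ (c i).val := fun hh => h1 (Fin.ext hh)
  rcases lt_or_gt_of_ne h1 with hl | hl
  · obtain ⟨j, _, _⟩ := build_far hl
    omega
  · obtain ⟨j, _, _⟩ := build_far hl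
    omega

lemma build_crys {m k : ℕ} {c : Fin (2 * m) →o Fin (k + 1)} {h} (hg : Good c h) :
    Crystallized (m + k) (build c h) := by
  intro a b hab v hav hvb
  rintro ⟨h3, h4⟩
  have hs := hab.2.2.1
  obtain ⟨x, rfl⟩ := (eqv c).surjective v
  rcases x with i | x
  · rw [build_inl] at h3 h4
    rw [eqv_val] at *
    have h1 := hg.2 i
    have h1 : (c (h i)).val ≠ (c i).val := fun hh => h1 (Fin.ext hh)
    rcases lt_or_gt_of_ne h1 with hl | hl
    · obtain ⟨j, _, _⟩ := build_far hl
      refine hs (eqv c (Sum.inr (j, false))) ?_ ?_ (build_short_inr c h _) <;> rw [eqv_val] <;> omega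
    · obtain ⟨j, _, _⟩ := build_far hl
      refine hs (eqv c (Sum.inr (j, false))) ?_ ?_ (build_short_inr c h _) <;> rw [eqv_val] <;> omega
  · exact hs _ hav hvb (build_short_inr c h x)

lemma build_card {m k : ℕ} {c : Fin (2 * m) →o Fin (k + 1)} {h} (hg : Good c h) :
    shortChords (m + k) (build c h) = k := by
  unfold shortChords
  have : Nat.card (Fin k) = k := by simp
  refine Eq.trans ?_ this
  symm
  apply Nat.card_eq_of_bijective (fun j : Fin k =>
    (⟨eqv c (Sum.inr (j, false)), by rw [build_inr, eqv_val, eqv_val]; simp [posn]⟩ :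
      {i : Fin (2 * (m + k)) // (build c h i).val = i.val + 1}))
  constructor
  · intro j j' hj
    simpa using hj
  · rintro ⟨v, hv⟩
    obtain ⟨x, rfl⟩ := (eqv c).surjective v
    rcases x with i | ⟨j, b⟩
    · exact absurd (Or.inl hv) (build_nshort_inl hg i)
    · cases b
      · exact ⟨j, rfl⟩
      · rw [build_inr, eqv_val, eqv_val] at hv
        simp [posn] at hv
        omega

lemma build_nshort_iff {m k : ℕ} {c : Fin (2 * m) →o Fin (k + 1)} {h} (hg : Good c h) (v) :
    ¬ ShortEnd (m + k) (build c h) v ↔ ∃ i, eqv c (Sum.inl i) = v := by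
  constructor
  · intro hv
    obtain ⟨x, rfl⟩ := (eqv c).surjective v
    rcases x with i | x
    · exact ⟨i, rfl⟩
    · exact absurd (build_short_inr c h x) hv
  · rintro ⟨i, rfl⟩
    exact build_nshort_inl hg i

lemma build_inj {m k : ℕ} {c c' : Fin (2 * m) →o Fin (k + 1)} {h h'} (hg : Good c h)
    (hg' : Good c' h') (heq : build c h = build c' h') : c = c' ∧ h = h' := by
  have hr : Set.range (fun i => posn c (Sum.inl i)) = Set.range (fun i => posn c' (Sum.inl i)) := by
    ext v
    constructor
    · rintro ⟨i, rfl⟩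
      have := (build_nshort_iff hg _).mpr ⟨i, rfl⟩
      rw [heq, build_nshort_iff hg'] at this
      obtain ⟨i', hi'⟩ := this
      exact ⟨i', congrArg Fin.val hi'⟩
    · rintro ⟨i, rfl⟩
      have := (build_nshort_iff hg' _).mpr ⟨i, rfl⟩
      rw [← heq, build_nshort_iff hg] at this
      obtain ⟨i', hi'⟩ := this
      exact ⟨i', congrArg Fin.val hi'⟩
  have hs : StrictMono (fun i => posn c (Sum.inl i)) := fun _ _ hh => posn_strict c hh
  have hs' : StrictMono (fun i => posn c' (Sum.inl i)) := fun _ _ hh => posn_strict c' hh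
  have hp := (StrictMono.range_inj hs hs').mp hr
  have hc : c = c' := by
    ext i
    have := congrFun hp i
    simp only [posn] at this
    omega
  subst hc
  refine ⟨rfl, ?_⟩
  ext i
  have := congrArg (fun f => f (eqv c (Sum.inl i))) heq
  simp only [build_inl] at this
  have := Sum.inl.inj ((eqv c).injective this)
  rw [this]

end Comb

section Comb2
open Finset

lemma exists_bubble {n : ℕ} {f : Equiv.Perm (Fin (2 * n))} {u v : ℕ} (huv : u ≤ v) (hv : v < 2 * n)
    (hns : ∀ i : Fin (2 * n), u ≤ i.val → i.val ≤ v → ¬ ShortEnd n f i) :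
    ∃ a b, a ≤ u ∧ v ≤ b ∧ IsBubble n f a b := by
  classical
  have e1 : ∃ x, x ≤ u ∧ (u - x = 0 ∨ ∃ j : Fin (2 * n), j.val + 1 = u - x ∧ ShortEnd n f j) :=
    ⟨u, le_rfl, Or.inl (by omega)⟩
  have e2 : ∃ b, v ≤ b ∧ b < 2 * n ∧
      (b + 1 = 2 * n ∨ ∃ j : Fin (2 * n), j.val = b + 1 ∧ ShortEnd n f j) :=
    ⟨2 * n - 1, by omega, by omega, Or.inl (by omega)⟩
  obtain ⟨x1, x2⟩ := Nat.find_spec e1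
  obtain ⟨y1, y2, y3⟩ := Nat.find_spec e2
  have xm := fun z => @Nat.find_min _ _ e1 z
  have ym := fun z => @Nat.find_min _ _ e2 z
  generalize Nat.find e1 = x at *
  generalize Nat.find e2 = b at *
  refine ⟨u - x, b, by omega, y1, by omega, y2, ?_, x2, y3⟩
  intro i h1 h2 hs
  by_cases hiu : i.val < u
  · apply xm (u - (i.val + 1)) (by omega)
    refine ⟨by omega, Or.inr ⟨i, by omega, hs⟩⟩
  · by_cases hiv : i.val ≤ v
    · exact hns i (by omega) hiv hs
    · apply ym (i.val - 1) (by omega)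
      refine ⟨by omega, by omega, Or.inr ⟨i, by omega, hs⟩⟩

lemma shortEnd_iff {n : ℕ} {f : Equiv.Perm (Fin (2 * n))} (hd : IsDiagram n f) (i) :
    ShortEnd n f i ↔ (f i).val = i.val + 1 ∨ (f (f i)).val = (f i).val + 1 := by
  unfold ShortEnd
  rw [hd.1 i]
  constructor <;> rintro (h | h) <;> omega

lemma shortEnd_f {n : ℕ} {f : Equiv.Perm (Fin (2 * n))} (hd : IsDiagram n f) (i) :
    ShortEnd n f (f i) ↔ ShortEnd n f i := by
  unfold ShortEnd
  rw [hd.1 i]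
  constructor <;> rintro (h | h) <;> omega

lemma exists_between {n : ℕ} {f : Equiv.Perm (Fin (2 * n))} (hd : IsDiagram n f)
    (hc : Crystallized n f) {u : Fin (2 * n)} (hu : ¬ ShortEnd n f u) (huv : u < f u) :
    ∃ s : Fin (2 * n), (f s).val = s.val + 1 ∧ u < s ∧ s < f u := by
  by_contra hcon
  push Not at hcon
  have huv' : u.val < (f u).val := huv
  have hns : ∀ i : Fin (2 * n), u.val ≤ i.val → i.val ≤ (f u).val → ¬ ShortEnd n f i := by
    intro i h1 h2 hs
    have hiu : i ≠ u := by rintro rfl; exact hu hs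
    have hiv : i ≠ f u := by rintro rfl; exact hu ((shortEnd_f hd _).mp hs)
    have hiu' : i.val ≠ u.val := fun hh => hiu (Fin.ext hh)
    have hiv' : i.val ≠ (f u).val := fun hh => hiv (Fin.ext hh)
    have hs0 := hs
    rcases (shortEnd_iff hd i).mp hs with h | h
    · have h3 : f u ≤ i := hcon i h (show u.val < i.val by omega)
      have h3 : (f u).val ≤ i.val := h3
      omega
    · have h5 : f i ≠ u := by rintro h5; exact hu (by rw [← h5]; exact (shortEnd_f hd _).mpr hs)
      have h5' : (f i).val ≠ u.val := fun hh => h5 (Fin.ext hh)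
      have h6 := h
      rw [hd.1] at h6
      have h3 : f u ≤ f i := hcon (f i) h (show u.val < (f i).val by omega)
      have h3 : (f u).val ≤ (f i).val := h3
      omega
  obtain ⟨a, b, ha, hb, hab⟩ := exists_bubble (le_of_lt huv') (f u).2 hns
  exact hc a b hab u ha (by omega) ⟨by omega, hb⟩

lemma build_surj {m k : ℕ} {f : Equiv.Perm (Fin (2 * (m + k)))} (hd : IsDiagram (m + k) f)
    (hcr : Crystallized (m + k) f) (hk : shortChords (m + k) f = k) :
    ∃ (c : Fin (2 * m) →o Fin (k + 1)) (h : Equiv.Perm (Fin (2 * m))), Good c h ∧ build c h = f := by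
  classical
  set S : Finset (Fin (2 * (m + k))) := univ.filter (fun i => (f i).val = i.val + 1) with hS
  set T : Finset (Fin (2 * (m + k))) := univ.filter (fun i => ¬ ShortEnd (m + k) f i) with hT
  have memS : ∀ i, i ∈ S ↔ (f i).val = i.val + 1 := by intro i; simp [hS]
  have memT : ∀ i, i ∈ T ↔ ¬ ShortEnd (m + k) f i := by intro i; simp [hT]
  have hSc : S.card = k := by
    refine Eq.trans ?_ hk
    unfold shortChords
    rw [Nat.card_eq_fintype_card, Fintype.card_subtype]
  have cardImg : ∀ A : Finset (Fin (2 * (m + k))), (A.image f).card = A.card :=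
    fun A => Finset.card_image_of_injective _ f.injective
  have hTc : T.card = 2 * m := by
    have hU : (univ : Finset (Fin (2 * (m + k)))) = T ∪ (S ∪ S.image f) := by
      ext i
      simp only [mem_univ, mem_union, mem_image, true_iff, memT, memS]
      rw [shortEnd_iff hd]
      by_cases h1 : (f i).val = i.val + 1
      · tauto
      · by_cases h2 : (f (f i)).val = (f i).val + 1
        · right; right; exact ⟨f i, h2, hd.1 i⟩
        · tauto
    have hc := congrArg Finset.card hU
    rw [Finset.card_union_of_disjoint, Finset.card_union_of_disjoint, cardImg, hSc] at hc
    · simp at hc; omega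
    · rw [Finset.disjoint_left]
      intro x hx hx2
      rw [mem_image] at hx2
      obtain ⟨y, hy, rfl⟩ := hx2
      rw [memS] at hx hy
      rw [hd.1] at hx
      omega
    · rw [Finset.disjoint_left]
      intro x hx hx2
      rw [memT, shortEnd_iff hd] at hx
      rw [mem_union, mem_image] at hx2
      rcases hx2 with hx2 | ⟨y, hy, rfl⟩
      · rw [memS] at hx2; tauto
      · rw [memS] at hy; rw [hd.1] at hx; tauto
  set t := T.orderEmbOfFin hTc with ht
  have tmem : ∀ i, ¬ ShortEnd (m + k) f (t i) := fun i => (memT _).mp (T.orderEmbOfFin_mem hTc i)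
  let c0 : Fin (2 * m) → ℕ := fun i => (S.filter (fun s => s < t i)).card
  have tval : ∀ i, (t i).val = i.val + 2 * c0 i := by
    intro i
    have hU : Finset.Iio (t i) = (Finset.Iio i).image t ∪
        (S.filter (fun s => s < t i) ∪ (S.filter (fun s => s < t i)).image f) := by
      ext x
      simp only [mem_union, mem_image, mem_filter, Finset.mem_Iio]
      constructor
      · intro hx
        by_cases hs : ShortEnd (m + k) f x
        · right
          rcases (shortEnd_iff hd x).mp hs with h1 | h1
          · left; exact ⟨(memS _).mpr h1, hx⟩
          · right
            refine ⟨f x, ⟨(memS _).mpr h1, ?_⟩, hd.1 x⟩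
            rw [hd.1] at h1
            have : x.val < (t i).val := hx
            show (f x).val < (t i).val
            omega
        · left
          have : x ∈ Set.range t := by
            rw [ht, Finset.range_orderEmbOfFin]
            exact_mod_cast (memT x).mpr hs
          obtain ⟨y, rfl⟩ := this
          exact ⟨y, t.lt_iff_lt.mp hx, rfl⟩
      · rintro (⟨y, hy, rfl⟩ | ⟨_, h⟩ | ⟨y, ⟨hy, hyt⟩, rfl⟩)
        · exact t.lt_iff_lt.mpr hy
        · exact h
        · rw [memS] at hy
          have h1 : y.val < (t i).val := hyt
          have h2 : f y ≠ t i := by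
            intro h2
            apply tmem i
            rw [← h2, shortEnd_f hd]
            exact Or.inl hy
          have h2' : (f y).val ≠ (t i).val := fun hh => h2 (Fin.ext hh)
          show (f y).val < (t i).val
          omega
    have hc := congrArg Finset.card hU
    rw [Finset.card_union_of_disjoint, Finset.card_union_of_disjoint, cardImg,
      Finset.card_image_of_injective _ t.injective, Fin.card_Iio, Fin.card_Iio] at hc
    · rw [hc]; simp only [c0]; omega
    · rw [Finset.disjoint_left]
      intro x hx hx2
      rw [mem_image] at hx2
      obtain ⟨y, hy, rfl⟩ := hx2
      rw [mem_filter, memS] at hx hy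
      rw [hd.1] at hx
      omega
    · rw [Finset.disjoint_left]
      intro x hx hx2
      rw [mem_image] at hx
      obtain ⟨y, hy, rfl⟩ := hx
      have := tmem y
      rw [shortEnd_iff hd] at this
      rw [mem_union, mem_image] at hx2
      rcases hx2 with hx2 | ⟨z, hz, hzz⟩
      · rw [mem_filter, memS] at hx2; tauto
      · rw [mem_filter, memS] at hz; rw [← hzz, hd.1] at this; tauto
  let c : Fin (2 * m) →o Fin (k + 1) :=
    ⟨fun i => ⟨c0 i, by
      have : c0 i ≤ S.card := Finset.card_le_card (Finset.filter_subset _ _)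
      omega⟩, by
      intro i j hij
      show c0 i ≤ c0 j
      apply Finset.card_le_card
      intro s hs
      rw [mem_filter] at hs ⊢
      exact ⟨hs.1, lt_of_lt_of_le hs.2 (t.monotone hij)⟩⟩
  have hcv : ∀ i, (c i).val = c0 i := fun i => rfl
  have hfT : ∀ x, f x ∈ T ↔ x ∈ T := by
    intro x
    rw [memT, memT, shortEnd_f hd]
  let te : Fin (2 * m) ≃ T := (T.orderIsoOfFin hTc).toEquiv
  have hte : ∀ i, (te i : Fin (2 * (m + k))) = t i := fun i => rfl
  let h : Equiv.Perm (Fin (2 * m)) := te.trans ((f.subtypePerm hfT).trans te.symm)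
  have hth : ∀ i, t (h i) = f (t i) := by
    intro i
    rw [← hte, ← hte]
    simp [h]
  have hinv : ∀ i, h (h i) = i := by
    intro i
    apply t.injective
    rw [hth, hth, hd.1]
  have key : ∀ i, t i < t (h i) → c0 i < c0 (h i) := by
    intro i hi
    rw [hth] at hi
    obtain ⟨s, hs1, hs2, hs3⟩ := exists_between hd hcr (tmem i) hi
    apply Finset.card_lt_card
    rw [Finset.ssubset_iff_of_subset]
    · refine ⟨s, ?_, ?_⟩
      · rw [mem_filter, memS, hth]; exact ⟨hs1, hs3⟩
      · rw [mem_filter]; intro hh; exact absurd hh.2 (not_lt.mpr hs2.le)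
    · intro x hx
      rw [mem_filter] at hx ⊢
      rw [hth]
      exact ⟨hx.1, hx.2.trans hi⟩
  have hg : Good c h := by
    have hne : ∀ i, h i ≠ i := by
      intro i hi
      have := hth i
      rw [hi] at this
      exact hd.2 _ this.symm
    refine ⟨⟨hinv, hne⟩, ?_⟩
    intro i hi
    have hi : c0 (h i) = c0 i := congrArg Fin.val hi
    have : t (h i) ≠ t i := fun hh => hne i (t.injective hh)
    rcases lt_or_gt_of_ne this with hl | hl
    · have := key (h i) (by rw [hinv]; exact hl)
      rw [hinv] at this
      omega
    · have := key i hl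
      omega
  refine ⟨c, h, hg, ?_⟩
  have hinl : ∀ i, eqv c (Sum.inl i) = t i := by
    intro i
    apply Fin.ext
    rw [eqv_val, tval]
    simp only [posn, hcv]
  have hbd := build_diag hg
  have main : ∀ N : ℕ, ∀ v : Fin (2 * (m + k)), v.val = N → build c h v = f v := by
    intro N
    induction N using Nat.strong_induction_on with
    | _ N ih =>
      intro v hv
      by_cases hs : ShortEnd (m + k) f v
      · have hs' : ShortEnd (m + k) (build c h) v := by
          by_contra hs'
          rw [build_nshort_iff hg] at hs'
          obtain ⟨i, rfl⟩ := hs'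
          rw [hinl] at hs
          exact tmem i hs
        rcases hs with h1 | h1 <;> rcases hs' with h2 | h2
        · apply Fin.ext; omega
        · have := ih (build c h v).val (by omega) _ rfl
          rw [hbd.1] at this
          rw [this, hd.1] at h1
          rw [this] at h2
          have h3 := congrArg Fin.val this
          have h4 : f v = build c h v := by rw [this, hd.1, ← this]
          exact h4.symm
        · have := ih (f v).val (by omega) _ rfl
          rw [hd.1] at this
          have h4 : build c h v = f v := by
            conv_lhs => rw [← this]
            rw [hbd.1]
          exact h4
        · apply Fin.ext; omega
      · have : v ∈ Set.range t := by
          rw [ht, Finset.range_orderEmbOfFin]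
          exact_mod_cast (memT v).mpr hs
        obtain ⟨i, rfl⟩ := this
        rw [← hinl, build_inl, hinl, hinl, hth]
  exact Equiv.ext fun v => main _ v rfl

lemma R_eq (m k : ℕ) : R (m + k) k =
    Nat.card {p : (Fin (2 * m) →o Fin (k + 1)) × Equiv.Perm (Fin (2 * m)) // Good p.1 p.2} := by
  symm
  apply Nat.card_eq_of_bijective (fun p =>
    (⟨build p.1.1 p.1.2, build_diag p.2, build_crys p.2, build_card p.2⟩ :
      {f : Equiv.Perm (Fin (2 * (m + k))) //
        IsDiagram (m + k) f ∧ Crystallized (m + k) f ∧ shortChords (m + k) f = k}))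
  constructor
  · rintro ⟨⟨c, h⟩, hg⟩ ⟨⟨c', h'⟩, hg'⟩ heq
    have := build_inj hg hg' (congrArg Subtype.val heq)
    simp only [Subtype.mk.injEq, Prod.mk.injEq]
    exact this
  · rintro ⟨f, h1, h2, h3⟩
    obtain ⟨c, h, hg, hb⟩ := build_surj h1 h2 h3
    exact ⟨⟨(c, h), hg⟩, Subtype.ext hb⟩

end Comb2

section Comb3
open Finset

lemma cycleType_diag {m : ℕ} {φ : Equiv.Perm (Fin (2 * m))} (hφ : IsDiagram m φ) :
    φ.cycleType = Multiset.replicate m 2 := by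
  have : Fact (Nat.Prime 2) := ⟨Nat.prime_two⟩
  have h1 : ∀ c ∈ φ.cycleType, c = 2 := by
    rw [← Equiv.Perm.pow_prime_eq_one_iff]
    ext i
    rw [pow_two, Equiv.Perm.mul_apply, hφ.1]; rfl
  have h2 := Multiset.eq_replicate_card.mpr h1
  have h3 := φ.sum_cycleType
  have h4 : φ.support = univ := by
    ext i
    simp [hφ.2 i]
  rw [h4, h2, Multiset.sum_replicate] at h3
  simp at h3
  rw [h2]
  congr 1
  omega

lemma card_conj {m : ℕ} {φ h : Equiv.Perm (Fin (2 * m))} (hφ : IsDiagram m φ) (hh : IsDiagram m h) :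
    Nat.card {σ : Equiv.Perm (Fin (2 * m)) // σ * φ * σ⁻¹ = h} = 2 ^ m * m.factorial := by
  have hc : IsConj φ h := by
    rw [Equiv.Perm.isConj_iff_cycleType_eq, cycleType_diag hφ, cycleType_diag hh]
  obtain ⟨σ0, h0⟩ := isConj_iff.mp hc
  have h1 : Nat.card (Subgroup.centralizer {φ}) = 2 ^ m * m.factorial := by
    rw [Equiv.Perm.nat_card_centralizer, cycleType_diag hφ]
    rcases Nat.eq_zero_or_pos m with rfl | hm
    · simp
    · rw [Multiset.toFinset_replicate, if_neg (by omega)]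
      simp [mul_comm m 2]
  rw [← h1]
  apply Nat.card_congr
  refine ⟨fun σ => ⟨σ0⁻¹ * σ.1, ?_⟩, fun τ => ⟨σ0 * τ.1, ?_⟩, ?_, ?_⟩
  · rw [Subgroup.mem_centralizer_singleton_iff]
    have h3 : σ.1 * φ = σ0 * φ * σ0⁻¹ * σ.1 := mul_inv_eq_iff_eq_mul.mp (σ.2.trans h0.symm)
    rw [mul_assoc, h3]; group
  · have := τ.2
    rw [Subgroup.mem_centralizer_singleton_iff] at this
    rw [← h0, mul_assoc σ0, this]; group
  · intro σ; ext1; simp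
  · intro τ; ext1; simp

lemma count1 {m k : ℕ} {φ : Equiv.Perm (Fin (2 * m))} (hφ : IsDiagram m φ) :
    Nat.card {p : (Fin (2 * m) →o Fin (k + 1)) × Equiv.Perm (Fin (2 * m)) //
      ∀ i, p.1 (p.2 (φ i)) ≠ p.1 (p.2 i)} = R (m + k) k * (2 ^ m * m.factorial) := by
  classical
  have hgood : ∀ p : (Fin (2 * m) →o Fin (k + 1)) × Equiv.Perm (Fin (2 * m)),
      (∀ i, p.1 (p.2 (φ i)) ≠ p.1 (p.2 i)) → Good p.1 (p.2 * φ * p.2⁻¹) := by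
    intro p hp
    refine ⟨⟨?_, ?_⟩, ?_⟩
    · intro i; simp [hφ.1]
    · intro i hi
      apply hφ.2 (p.2⁻¹ i)
      apply p.2.injective
      simpa using hi
    · intro i
      have := hp (p.2⁻¹ i)
      simpa using this
  rw [R_eq]
  let F : {p : (Fin (2 * m) →o Fin (k + 1)) × Equiv.Perm (Fin (2 * m)) //
      ∀ i, p.1 (p.2 (φ i)) ≠ p.1 (p.2 i)} →
      {p : (Fin (2 * m) →o Fin (k + 1)) × Equiv.Perm (Fin (2 * m)) // Good p.1 p.2} :=
    fun p => ⟨(p.1.1, p.1.2 * φ * p.1.2⁻¹), hgood p.1 p.2⟩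
  have : Finite (Fin (2 * m) →o Fin (k + 1)) := DFunLike.finite _
  have : Fintype {p : (Fin (2 * m) →o Fin (k + 1)) × Equiv.Perm (Fin (2 * m)) // Good p.1 p.2} :=
    Fintype.ofFinite _
  rw [← Nat.card_congr (Equiv.sigmaFiberEquiv F), Nat.card_sigma]
  rw [Finset.sum_congr rfl (g := fun _ => 2 ^ m * m.factorial)]
  · simp [Nat.card_eq_fintype_card]
  · rintro ⟨⟨c, h⟩, hg⟩ _
    rw [← card_conj hφ hg.1]
    apply Nat.card_congr
    refine ⟨fun p => ⟨p.1.1.2, ?_⟩, fun σ => ⟨⟨(c, σ.1), ?_⟩, ?_⟩, ?_, ?_⟩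
    · have := congrArg (fun q => q.1.2) p.2
      exact this
    · intro i
      have h1 : σ.1 (φ i) = h (σ.1 i) := by
        have h2 := σ.2
        have h3 : h * σ.1 = σ.1 * φ := (mul_inv_eq_iff_eq_mul.mp h2).symm
        have := congrArg (fun q => q i) h3
        exact this.symm
      simp only [h1]
      exact hg.2 _
    · apply Subtype.ext
      simp only [F]
      rw [σ.2]
    · rintro ⟨⟨⟨c', σ⟩, h1⟩, h2⟩
      have := congrArg (fun q => q.1.1) h2
      simp only [F] at this
      subst this
      rfl
    · intro σ; rfl

lemma count2 {m k : ℕ} {φ : Equiv.Perm (Fin (2 * m))} :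
    Nat.card {p : (Fin (2 * m) →o Fin (k + 1)) × Equiv.Perm (Fin (2 * m)) //
      ∀ i, p.1 (p.2 (φ i)) ≠ p.1 (p.2 i)} =
    ∑ g ∈ univ.filter (fun g : Fin (2 * m) → Fin (k + 1) => ∀ i, g (φ i) ≠ g i),
      ∏ a, (Fintype.card {i // g i = a}).factorial := by
  classical
  let F : {p : (Fin (2 * m) →o Fin (k + 1)) × Equiv.Perm (Fin (2 * m)) //
      ∀ i, p.1 (p.2 (φ i)) ≠ p.1 (p.2 i)} →
      {g : Fin (2 * m) → Fin (k + 1) // ∀ i, g (φ i) ≠ g i} :=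
    fun p => ⟨fun i => p.1.1 (p.1.2 i), p.2⟩
  have : Finite (Fin (2 * m) →o Fin (k + 1)) := DFunLike.finite _
  rw [← Nat.card_congr (Equiv.sigmaFiberEquiv F), Nat.card_sigma]
  rw [← Finset.sum_subtype_eq_sum_filter, Finset.subtype_univ]
  apply Finset.sum_congr rfl
  rintro ⟨g, hg⟩ _
  rw [← DomMulAct.stabilizer_card g, ← Nat.card_eq_fintype_card]
  apply Nat.card_congr
  have key : ∀ (c : Fin (2 * m) →o Fin (k + 1)) (σ : Equiv.Perm (Fin (2 * m))),
      (fun i => c (σ i)) = g → (c : Fin (2 * m) → Fin (k + 1)) = g ∘ Tuple.sort g := by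
    intro c σ h
    have h1 : g ∘ (σ⁻¹ : Equiv.Perm _) = c := by
      rw [← h]; ext i; simp
    have := (Tuple.comp_sort_eq_comp_iff_monotone (f := g) (σ := σ⁻¹)).mpr (by rw [h1]; exact c.monotone)
    rw [← this, h1]
  refine ⟨fun p => ⟨Tuple.sort g * p.1.1.2, ?_⟩,
    fun τ => ⟨⟨(⟨g ∘ Tuple.sort g, Tuple.monotone_sort g⟩, (Tuple.sort g)⁻¹ * τ.1), ?_⟩, ?_⟩, ?_, ?_⟩
  · have h1 : (fun i => p.1.1.1 (p.1.1.2 i)) = g := congrArg Subtype.val p.2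
    have h2 := key _ _ h1
    ext i
    have h3 := congrFun h2 (p.1.1.2 i)
    have h4 := congrFun h1 i
    simp only [Function.comp_apply, Equiv.Perm.mul_apply] at h3 ⊢
    rw [← h3]
    exact congrArg Fin.val h4
  · intro i
    have h2 := τ.2
    have h1 : ∀ i, g (τ.1 i) = g i := fun i => congrFun h2 i
    simp [h1]
    exact hg i
  · apply Subtype.ext
    funext i
    have h2 := τ.2
    have h1 : ∀ i, g (τ.1 i) = g i := fun i => congrFun h2 i
    simp [F, h1]
  · rintro ⟨⟨⟨c, σ⟩, h1⟩, h2⟩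
    have h3 := key _ _ (congrArg Subtype.val h2)
    simp only [Subtype.mk.injEq, Prod.mk.injEq]
    refine ⟨?_, by simp⟩
    ext i
    rw [h3]; rfl
  · intro τ; ext1; simp

noncomputable def eW (m : ℕ) : Fin m × Bool ≃ Fin (2 * m) :=
  Fintype.equivFinOfCardEq (by simp [mul_comm])

noncomputable def phi (m : ℕ) : Equiv.Perm (Fin (2 * m)) :=
  (eW m).symm.trans ((Equiv.prodCongr (Equiv.refl _) Equiv.boolNot).trans (eW m))

lemma phi_e (m : ℕ) (j b) : phi m (eW m (j, b)) = eW m (j, !b) := by simp [phi]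

lemma phi_diag (m : ℕ) : IsDiagram m (phi m) := by
  constructor
  · intro i
    obtain ⟨⟨j, b⟩, rfl⟩ := (eW m).surjective i
    rw [phi_e, phi_e, Bool.not_not]
  · intro i
    obtain ⟨⟨j, b⟩, rfl⟩ := (eW m).surjective i
    rw [phi_e]
    intro h
    have := (eW m).injective h
    simp at this

lemma sum_prod {m K : ℕ} (x : Fin K → ℝ) :
    ∑ g ∈ univ.filter (fun g : Fin (2 * m) → Fin K => ∀ i, g (phi m i) ≠ g i), ∏ i, x (g i) =
      ((∑ a, x a) ^ 2 - ∑ a, x a ^ 2) ^ m := by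
  classical
  have h1 : (∑ a, x a) ^ 2 - ∑ a, x a ^ 2 =
      ∑ p ∈ (univ : Finset (Fin K)).offDiag, x p.1 * x p.2 := by
    rw [pow_two, Finset.sum_mul_sum, ← Finset.sum_product', ← Finset.diag_union_offDiag,
      Finset.sum_union (Finset.disjoint_diag_offDiag _), Finset.sum_diag]
    simp [pow_two]
  have h2 : ((∑ a, x a) ^ 2 - ∑ a, x a ^ 2) ^ m = ∏ _j : Fin m, ((∑ a, x a) ^ 2 - ∑ a, x a ^ 2) := by
    simp
  rw [h2, h1, Finset.prod_univ_sum]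
  refine Finset.sum_nbij' (fun g j => (g (eW m (j, false)), g (eW m (j, true))))
    (fun p i => if ((eW m).symm i).2 then (p ((eW m).symm i).1).2 else (p ((eW m).symm i).1).1)
    ?_ ?_ ?_ ?_ ?_
  · intro g hg
    rw [mem_filter] at hg
    rw [Fintype.mem_piFinset]
    intro j
    rw [Finset.mem_offDiag]
    refine ⟨mem_univ _, mem_univ _, ?_⟩
    have := hg.2 (eW m (j, true))
    rw [phi_e] at this
    exact this
  · intro p hp
    rw [Fintype.mem_piFinset] at hp
    rw [mem_filter]
    refine ⟨mem_univ _, ?_⟩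
    intro i
    obtain ⟨⟨j, b⟩, rfl⟩ := (eW m).surjective i
    rw [phi_e]
    have := hp j
    rw [Finset.mem_offDiag] at this
    cases b
    · simpa using this.2.2.symm
    · simpa using this.2.2
  · intro g _
    funext i
    obtain ⟨⟨j, b⟩, rfl⟩ := (eW m).surjective i
    cases b <;> simp
  · intro p _
    funext j
    simp
  · intro g _
    rw [← (eW m).prod_comp, Fintype.prod_prod_type]
    simp [mul_comm]

lemma R_sum (m k : ℕ) : R (m + k) k * (2 ^ m * m.factorial) =
    ∑ g ∈ univ.filter (fun g : Fin (2 * m) → Fin (k + 1) => ∀ i, g (phi m i) ≠ g i),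
      ∏ a, (Fintype.card {i // g i = a}).factorial := by
  rw [← count1 (phi_diag m), count2]

end Comb3

section Dirichlet
open MeasureTheory Set

noncomputable def ph (s : ℕ) : ℝ → ℝ := (Ioi (0 : ℝ)).indicator (fun x => x ^ s * Real.exp (-x))

lemma ph_nonneg (s x) : 0 ≤ ph s x := by
  unfold ph
  apply indicator_nonneg
  intro x hx
  have : 0 < x := hx
  positivity

lemma ph_meas (s : ℕ) : Measurable (ph s) := by
  unfold ph
  apply Measurable.indicator _ measurableSet_Ioi
  fun_prop

lemma ph_int (s : ℕ) : Integrable (ph s) := by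
  unfold ph
  rw [integrable_indicator_iff measurableSet_Ioi]
  have := Real.GammaIntegral_convergent (s := (s : ℝ) + 1) (by positivity)
  refine this.congr_fun ?_ measurableSet_Ioi
  intro x hx
  simp only [add_sub_cancel_right, Real.rpow_natCast]
  ring

lemma ph_integral (s : ℕ) : ∫ x, ph s x = (s.factorial : ℝ) := by
  unfold ph
  rw [integral_indicator measurableSet_Ioi, ← Real.Gamma_nat_eq_factorial, Real.Gamma_eq_integral (by positivity)]
  apply setIntegral_congr_fun measurableSet_Ioi
  intro x hx
  simp only [add_sub_cancel_right, Real.rpow_natCast]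
  ring

/-- barycentric coordinates -/
noncomputable def bary {k : ℕ} (u : Fin k → ℝ) : Fin (k + 1) → ℝ := Fin.cons (1 - ∑ i, u i) u

lemma bary_sum {k : ℕ} (u : Fin k → ℝ) : ∑ a, bary u a = 1 := by
  unfold bary
  rw [Fin.sum_cons]; ring

lemma bary_cont {k : ℕ} : Continuous (bary : (Fin k → ℝ) → _) := by
  unfold bary
  apply continuous_pi
  intro a
  refine Fin.cases ?_ (fun i => ?_) a
  · simp only [Fin.cons_zero]; fun_prop
  · simp only [Fin.cons_succ]; fun_prop

def simp_set (k : ℕ) : Set (Fin k → ℝ) := {u | ∀ a, 0 < bary u a}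

lemma simp_set_meas (k : ℕ) : MeasurableSet (simp_set k) := by
  unfold simp_set
  simp only [ofPred_forall]
  apply MeasurableSet.iInter
  intro a
  apply IsOpen.measurableSet
  exact isOpen_lt continuous_const ((continuous_apply a).comp bary_cont)

lemma prod_ph {k : ℕ} (s : Fin (k + 1) → ℕ) {r : ℝ} (hr : 0 < r) (u : Fin k → ℝ) :
    ENNReal.ofReal (∏ a, ph (s a) (r * bary u a)) = ENNReal.ofReal (r ^ (∑ a, s a) * Real.exp (-r)) *
      (simp_set k).indicator (fun u => ENNReal.ofReal (∏ a, bary u a ^ s a)) u := by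
  by_cases hu : u ∈ simp_set k
  · rw [indicator_of_mem hu, ← ENNReal.ofReal_mul (by positivity)]
    congr 1
    have h1 : ∀ a, ph (s a) (r * bary u a) = r ^ s a * bary u a ^ s a * Real.exp (-(r * bary u a)) := by
      intro a
      unfold ph
      rw [indicator_of_mem (show r * bary u a ∈ Ioi 0 from mul_pos hr (hu a)), mul_pow]
    simp only [h1, Finset.prod_mul_distrib, Finset.prod_pow_eq_pow_sum]
    rw [← Real.exp_sum, Finset.sum_neg_distrib, ← Finset.mul_sum, bary_sum]
    ring_nf
  · rw [indicator_of_notMem hu, mul_zero]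
    simp only [simp_set, mem_ofPred_eq, not_forall] at hu
    obtain ⟨a, ha⟩ := hu
    rw [Finset.prod_eq_zero (Finset.mem_univ a), ENNReal.ofReal_zero]
    unfold ph
    apply indicator_of_notMem
    simp only [mem_Ioi, not_lt] at ha ⊢
    exact mul_nonpos_of_nonneg_of_nonpos hr.le ha

lemma dirichlet (k : ℕ) (s : Fin (k + 1) → ℕ) :
    ENNReal.ofReal (∏ a, ((s a).factorial : ℝ)) =
      ENNReal.ofReal (((∑ a, s a + k).factorial : ℝ)) *
        ∫⁻ u in simp_set k, ENNReal.ofReal (∏ a, bary u a ^ s a) := by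
  set H : (Fin (k + 1) → ℝ) → ENNReal := fun x => ENNReal.ofReal (∏ a, ph (s a) (x a)) with hH
  have Hm : Measurable H := by
    apply Measurable.ennreal_ofReal
    apply Finset.measurable_prod
    intro a _
    exact (ph_meas _).comp (measurable_pi_apply a)
  set D := ∫⁻ u in simp_set k, ENNReal.ofReal (∏ a, bary u a ^ s a) with hD
  have e1 : ENNReal.ofReal (∏ a, ((s a).factorial : ℝ)) = ∫⁻ x, H x := by
    simp_rw [← ph_integral]
    rw [← integral_fintype_prod_volume_eq_prod, ofReal_integral_eq_lintegral_ofReal]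
    · exact Integrable.fintype_prod (fun a => ph_int (s a))
    · exact Filter.Eventually.of_forall fun x => Finset.prod_nonneg fun a _ => ph_nonneg _ _
  have cm : Measurable (fun p : ℝ × (Fin k → ℝ) => (Fin.cons p.1 p.2 : Fin (k + 1) → ℝ)) := by
    apply measurable_pi_lambda
    intro a
    refine Fin.cases ?_ (fun i => ?_) a
    · simp only [Fin.cons_zero]; fun_prop
    · simp only [Fin.cons_succ]; fun_prop
  have e2 : ∫⁻ x, H x = ∫⁻ p : ℝ × (Fin k → ℝ), H (Fin.cons p.1 p.2) := by
    rw [← ((volume_preserving_piFinSuccAbove (fun _ : Fin (k + 1) => ℝ) 0).symm _).lintegral_comp Hm]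
    congr 1
    funext p
    congr 1
    funext a
    refine Fin.cases ?_ (fun i => ?_) a
    · simp [MeasurableEquiv.piFinSuccAbove]
    · simp [MeasurableEquiv.piFinSuccAbove]
  have e3 : ∫⁻ p : ℝ × (Fin k → ℝ), H (Fin.cons p.1 p.2) =
      ∫⁻ y : Fin k → ℝ, ∫⁻ r : ℝ, H (Fin.cons (r - ∑ i, y i) y) := by
    have hcm := Hm.comp cm
    refine (lintegral_prod_symm' _ hcm).trans ?_
    congr 1
    funext y
    exact (lintegral_sub_right_eq_self (fun x => H (Fin.cons x y)) (∑ i, y i)).symm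
  have e4 : ∫⁻ y : Fin k → ℝ, ∫⁻ r : ℝ, H (Fin.cons (r - ∑ i, y i) y) =
      ∫⁻ r : ℝ, ∫⁻ y : Fin k → ℝ, H (Fin.cons (r - ∑ i, y i) y) := by
    apply lintegral_lintegral_swap
    apply Measurable.aemeasurable
    have : Measurable (fun p : (Fin k → ℝ) × ℝ => (p.2 - ∑ i, p.1 i, p.1)) := by fun_prop
    exact Hm.comp (cm.comp this)
  have e5 : ∀ r : ℝ, ∫⁻ y : Fin k → ℝ, H (Fin.cons (r - ∑ i, y i) y) =
      ENNReal.ofReal (ph (∑ a, s a + k) r) * D := by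
    intro r
    by_cases hr : 0 < r
    · have hG : Measurable (fun y : Fin k → ℝ => H (Fin.cons (r - ∑ i, y i) y)) := by
        have : Measurable (fun y : (Fin k → ℝ) => (r - ∑ i, y i, y)) := by fun_prop
        exact Hm.comp (cm.comp this)
      have h1 : ∫⁻ u : Fin k → ℝ, H (Fin.cons (r - ∑ i, (r • u) i) (r • u)) =
          ENNReal.ofReal ((r ^ k)⁻¹) * ∫⁻ y : Fin k → ℝ, H (Fin.cons (r - ∑ i, y i) y) := by
        have := Measure.map_addHaar_smul (volume : Measure (Fin k → ℝ)) hr.ne'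
        rw [← lintegral_map (μ := volume) (f := fun y : Fin k → ℝ => H (Fin.cons (r - ∑ i, y i) y)) (g := fun u => r • u) hG (measurable_const_smul r), this, lintegral_smul_measure]
        simp [abs_of_pos hr]
      have h2 : ∀ u : Fin k → ℝ, H (Fin.cons (r - ∑ i, (r • u) i) (r • u)) =
          ENNReal.ofReal (r ^ (∑ a, s a) * Real.exp (-r)) *
            (simp_set k).indicator (fun u => ENNReal.ofReal (∏ a, bary u a ^ s a)) u := by
        intro u
        rw [← prod_ph s hr]
        simp only [hH]
        congr 1
        apply Finset.prod_congr rfl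
        intro a _
        congr 1
        refine Fin.cases ?_ (fun i => ?_) a
        · simp [bary, ← Finset.mul_sum]; ring
        · simp [bary]
      simp_rw [h2] at h1
      rw [lintegral_const_mul' _ _ ENNReal.ofReal_ne_top, lintegral_indicator (simp_set_meas k), ← hD] at h1
      have h3 : ENNReal.ofReal (r ^ k) * ENNReal.ofReal ((r ^ k)⁻¹) = 1 := by
        rw [← ENNReal.ofReal_mul (by positivity), mul_inv_cancel₀ (by positivity), ENNReal.ofReal_one]
      have h4 := congrArg (fun z => ENNReal.ofReal (r ^ k) * z) h1
      simp only [← mul_assoc] at h4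
      rw [h3, one_mul] at h4
      rw [← h4, ← ENNReal.ofReal_mul (by positivity)]
      congr 2
      unfold ph
      rw [indicator_of_mem (show r ∈ Ioi 0 from hr)]
      ring
    · have h1 : ph (∑ a, s a + k) r = 0 := by
        unfold ph
        exact indicator_of_notMem (by simpa using hr) _
      rw [h1, ENNReal.ofReal_zero, zero_mul]
      rw [lintegral_eq_zero_of_ae_eq_zero]
      apply Filter.Eventually.of_forall
      intro y
      simp only [hH, Pi.zero_apply]
      have : ∃ a : Fin (k + 1), (Fin.cons (r - ∑ i, y i) y : Fin (k + 1) → ℝ) a ≤ 0 := by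
        by_contra hcon
        push Not at hcon
        have h5 : 0 < ∑ a, (Fin.cons (r - ∑ i, y i) y : Fin (k + 1) → ℝ) a :=
          Finset.sum_pos (fun a _ => hcon a) Finset.univ_nonempty
        rw [Fin.sum_cons] at h5
        linarith
      obtain ⟨a, ha⟩ := this
      rw [Finset.prod_eq_zero (Finset.mem_univ a), ENNReal.ofReal_zero]
      unfold ph
      exact indicator_of_notMem (by simpa using ha) _
  rw [e1, e2, e3, e4]
  simp_rw [e5]
  rw [lintegral_mul_const _ (ph_meas _).ennreal_ofReal,
    ← ofReal_integral_eq_lintegral_ofReal (ph_int _) (Filter.Eventually.of_forall fun x => ph_nonneg _ _),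
    ph_integral]

end Dirichlet

section Laplace
open MeasureTheory Set Filter Topology

noncomputable def Qf {k : ℕ} (v : Fin k → ℝ) : ℝ := ∑ i, v i ^ 2 + (∑ i, v i) ^ 2

lemma Qf_cont {k : ℕ} : Continuous (Qf : (Fin k → ℝ) → ℝ) := by
  unfold Qf; fun_prop

lemma gauss_prod_int {k : ℕ} {c : ℝ} (hc : 0 < c) :
    Integrable (fun v : Fin k → ℝ => Real.exp (-c * ∑ i, v i ^ 2)) := by
  have := Integrable.fintype_prod (fun _ : Fin k => integrable_exp_neg_mul_sq hc)
  refine this.congr (Eventually.of_forall fun v => ?_)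
  simp only
  rw [← Real.exp_sum, Finset.mul_sum]

lemma gauss_int {k : ℕ} {c : ℝ} (hc : 0 < c) :
    Integrable (fun v : Fin k → ℝ => Real.exp (-c * Qf v)) := by
  refine (gauss_prod_int (k := k) hc).mono' ?_ ?_
  · apply Continuous.aestronglyMeasurable
    have := Qf_cont (k := k)
    fun_prop
  · apply Eventually.of_forall
    intro v
    rw [Real.norm_eq_abs, abs_of_pos (Real.exp_pos _), Real.exp_le_exp]
    unfold Qf
    nlinarith [mul_nonneg hc.le (sq_nonneg (∑ i, v i))]

lemma gauss_integral {k : ℕ} (hk : 1 ≤ k) (c : ℝ) :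
    ∫ v : Fin k → ℝ, Real.exp (-c * Qf v) = Real.sqrt (Real.pi / c) ^ k / Real.sqrt (k + 1) := by
  have hk' : (0 : ℝ) < k := by exact_mod_cast hk
  set β : ℝ := (Real.sqrt (k + 1) - 1) / k with hβ
  have hs : Real.sqrt ((k : ℝ) + 1) ^ 2 = k + 1 := Real.sq_sqrt (by positivity)
  have hsp : 0 < Real.sqrt ((k : ℝ) + 1) := Real.sqrt_pos.mpr (by positivity)
  have hb2 : k * β = Real.sqrt (k + 1) - 1 := by rw [hβ]; field_simp
  have hb : 2 * β + k * β ^ 2 = 1 := by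
    have : k * (2 * β + k * β ^ 2) = k * 1 := by
      have : k * (2 * β + k * β ^ 2) = 2 * (k * β) + (k * β) ^ 2 := by ring
      rw [this, hb2]; nlinarith
    exact mul_left_cancel₀ hk'.ne' this
  set M : Matrix (Fin k) (Fin k) ℝ := (1 : Matrix (Fin k) (Fin k) ℝ) + Matrix.replicateCol Unit (fun _ : Fin k => β) * Matrix.replicateRow Unit (fun _ : Fin k => (1:ℝ)) with hM
  have hdet : M.det = Real.sqrt (k + 1) := by
    rw [hM, Matrix.det_one_add_replicateCol_mul_replicateRow]
    simp [dotProduct]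
    linarith
  have hMv : ∀ (v : Fin k → ℝ) i, Matrix.toLin' M v i = v i + β * ∑ j, v j := by
    intro v i
    rw [Matrix.toLin'_apply, hM, Matrix.add_mulVec, Matrix.one_mulVec, Pi.add_apply]
    congr 1
    simp [Matrix.mulVec, dotProduct, Matrix.mul_apply, Finset.mul_sum]
  have hQ : ∀ v : Fin k → ℝ, Qf v = ∑ i, (Matrix.toLin' M v i) ^ 2 := by
    intro v
    simp only [hMv, Qf]
    have : ∀ i, (v i + β * ∑ j, v j) ^ 2 = v i ^ 2 + (2 * β * ∑ j, v j) * v i + (β * ∑ j, v j) ^ 2 := by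
      intro i; ring
    simp only [this, Finset.sum_add_distrib, ← Finset.mul_sum]
    simp
    linear_combination (-(∑ j, v j) ^ 2) * hb
  have hmap := Real.map_matrix_volume_pi_eq_smul_volume_pi (M := M) (by rw [hdet]; exact hsp.ne')
  have h1 : ∫ v : Fin k → ℝ, Real.exp (-c * Qf v) =
      ∫ w, Real.exp (-c * ∑ i, w i ^ 2) ∂(Measure.map (Matrix.toLin' M) volume) := by
    rw [integral_map]
    · simp only [hQ]
    · apply Continuous.aemeasurable
      exact LinearMap.continuous_of_finiteDimensional _
    · apply Continuous.aestronglyMeasurable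
      fun_prop
  rw [h1, hmap, integral_smul_measure, hdet]
  have h2 : ∫ w : Fin k → ℝ, Real.exp (-c * ∑ i, w i ^ 2) = Real.sqrt (Real.pi / c) ^ k := by
    have : ∀ w : Fin k → ℝ, Real.exp (-c * ∑ i, w i ^ 2) = ∏ i, Real.exp (-c * w i ^ 2) := by
      intro w; rw [← Real.exp_sum, Finset.mul_sum]
    simp only [this]
    rw [integral_fintype_prod_volume_eq_pow (fun x : ℝ => Real.exp (-c * x ^ 2)), integral_gaussian]
    simp
  rw [h2, ENNReal.toReal_ofReal (abs_nonneg _), abs_of_pos (by positivity), smul_eq_mul]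
  field_simp

noncomputable def Jm (k m : ℕ) : ℝ := ∫ u in simp_set k, (1 - ∑ a, bary u a ^ 2) ^ m

noncomputable def Fm (k m : ℕ) : (Fin k → ℝ) → ℝ :=
  (simp_set k).indicator (fun u => (1 - ∑ a, bary u a ^ 2) ^ m)

lemma bary_shift {k : ℕ} (v : Fin k → ℝ) (t : ℝ) (a : Fin (k + 1)) :
    bary ((fun _ => 1 / ((k : ℝ) + 1)) + t • v) a =
      1 / ((k : ℝ) + 1) + t * (Fin.cons (-∑ i, v i) v : Fin (k + 1) → ℝ) a := by
  have hk : (0 : ℝ) < (k : ℝ) + 1 := by positivity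
  refine Fin.cases ?_ (fun i => ?_) a
  · simp [bary, Finset.sum_add_distrib, ← Finset.mul_sum]
    field_simp
    ring
  · simp [bary]

lemma bary_sq {k : ℕ} (v : Fin k → ℝ) (t : ℝ) :
    ∑ a, bary ((fun _ => 1 / ((k : ℝ) + 1)) + t • v) a ^ 2 = 1 / ((k : ℝ) + 1) + t ^ 2 * Qf v := by
  have hk : (0 : ℝ) < (k : ℝ) + 1 := by positivity
  simp only [bary_shift]
  rw [Fin.sum_univ_succ]
  simp only [Fin.cons_zero, Fin.cons_succ]
  have : ∀ i, (1 / ((k : ℝ) + 1) + t * v i) ^ 2 =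
      (1 / ((k : ℝ) + 1)) ^ 2 + (2 * (1 / ((k : ℝ) + 1)) * t) * v i + t ^ 2 * v i ^ 2 := by
    intro i; ring
  simp only [this, Finset.sum_add_distrib, ← Finset.mul_sum]
  simp [Qf]
  field_simp
  ring

lemma bary_sq_le {k : ℕ} {u : Fin k → ℝ} (hu : u ∈ simp_set k) : 0 ≤ 1 - ∑ a, bary u a ^ 2 := by
  have h := Finset.sum_sq_le_sq_sum_of_nonneg (s := Finset.univ) (f := bary u) (fun a _ => (hu a).le)
  rw [bary_sum] at h
  linarith

lemma laplace {k : ℕ} (hk : 1 ≤ k) :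
    Tendsto (fun m : ℕ => Jm k m * Real.sqrt m ^ k * (((k : ℝ) + 1) / k) ^ m) atTop
      (𝓝 (Real.sqrt (Real.pi / (((k : ℝ) + 1) / k)) ^ k / Real.sqrt (k + 1))) := by
  have hk' : (0 : ℝ) < k := by exact_mod_cast hk
  set c : ℝ := ((k : ℝ) + 1) / k with hc
  have hcp : 0 < c := by positivity
  rw [← gauss_integral hk]
  let p : Fin k → ℝ := fun _ => 1 / ((k : ℝ) + 1)
  have key : Tendsto (fun m : ℕ => ∫ v : Fin k → ℝ, Fm k m (p + (Real.sqrt m)⁻¹ • v) * c ^ m) atTop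
      (𝓝 (∫ v : Fin k → ℝ, Real.exp (-c * Qf v))) := by
    have eqn : ∀ (m : ℕ), 0 < m → ∀ v : Fin k → ℝ, (1 - ∑ a, bary (p + (Real.sqrt m)⁻¹ • v) a ^ 2) ^ m * c ^ m
        = (1 + (-c * Qf v) / m) ^ m := by
      intro m hm v
      have hm' : (0 : ℝ) < m := by exact_mod_cast hm
      rw [← mul_pow, bary_sq, inv_pow, Real.sq_sqrt hm'.le]
      congr 1
      rw [hc]
      field_simp
      ring
    apply tendsto_integral_filter_of_dominated_convergence (fun v => Real.exp (-c * Qf v))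
    · apply Eventually.of_forall
      intro m
      apply Measurable.aestronglyMeasurable
      apply Measurable.mul_const
      have h1 : Measurable (Fm k m) := by
        unfold Fm
        apply Measurable.indicator _ (simp_set_meas k)
        apply Continuous.measurable
        have := bary_cont (k := k)
        fun_prop
      apply h1.comp
      fun_prop
    · filter_upwards [eventually_gt_atTop 0] with m hm
      apply Eventually.of_forall
      intro v
      have hm' : (0 : ℝ) < m := by exact_mod_cast hm
      unfold Fm
      by_cases hu : p + (Real.sqrt m)⁻¹ • v ∈ simp_set k
      · rw [indicator_of_mem hu]
        have h0 := bary_sq_le hu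
        rw [Real.norm_eq_abs, abs_of_nonneg (by positivity), eqn m hm v]
        have h2 : 0 ≤ 1 + (-c * Qf v) / m := by
          have h3 : 0 ≤ (1 - ∑ a, bary (p + (Real.sqrt m)⁻¹ • v) a ^ 2) * c := by positivity
          have h4 : (1 - ∑ a, bary (p + (Real.sqrt m)⁻¹ • v) a ^ 2) * c = 1 + (-c * Qf v) / m := by
            rw [bary_sq, inv_pow, Real.sq_sqrt hm'.le, hc]
            field_simp
            ring
          rwa [h4] at h3
        calc (1 + (-c * Qf v) / m) ^ m ≤ (Real.exp ((-c * Qf v) / m)) ^ m := by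
              apply pow_le_pow_left₀ h2
              rw [add_comm]
              exact Real.add_one_le_exp _
          _ = Real.exp (-c * Qf v) := by
              rw [← Real.exp_nat_mul]
              congr 1
              field_simp
      · rw [indicator_of_notMem hu, zero_mul, norm_zero]
        positivity
    · exact gauss_int hcp
    · apply Eventually.of_forall
      intro v
      refine (Real.tendsto_one_add_div_pow_exp (-c * Qf v)).congr' ?_
      have hev : ∀ a : Fin (k + 1), ∀ᶠ m : ℕ in atTop, 0 < bary (p + (Real.sqrt m)⁻¹ • v) a := by
        intro a
        have h1 : Tendsto (fun m : ℕ => (Real.sqrt m)⁻¹) atTop (𝓝 0) :=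
          (Real.tendsto_sqrt_atTop.comp tendsto_natCast_atTop_atTop).inv_tendsto_atTop
        have h2 : Tendsto (fun m : ℕ => bary (p + (Real.sqrt m)⁻¹ • v) a) atTop
            (𝓝 (1 / ((k : ℝ) + 1) + 0 * (Fin.cons (-∑ i, v i) v : Fin (k + 1) → ℝ) a)) := by
          simp only [p, bary_shift]
          exact (h1.mul_const _).const_add _
        exact h2.eventually_const_lt (by rw [zero_mul, add_zero]; positivity)
      filter_upwards [eventually_gt_atTop 0, eventually_all.mpr hev] with m hm hall
      unfold Fm
      rw [indicator_of_mem (show p + (Real.sqrt m)⁻¹ • v ∈ simp_set k from hall), eqn m hm v]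
  refine key.congr' ?_
  filter_upwards [eventually_gt_atTop 0] with m hm
  have hm' : (0 : ℝ) < m := by exact_mod_cast hm
  rw [integral_mul_const]
  congr 1
  rw [Measure.integral_comp_smul volume (fun w => Fm k m (p + w)) ((Real.sqrt m)⁻¹),
    integral_add_left_eq_self (Fm k m) p]
  unfold Fm Jm
  rw [integral_indicator (simp_set_meas k), mul_comm]
  simp only [Module.finrank_fintype_fun_eq_card, Fintype.card_fin, smul_eq_mul]
  rw [abs_of_nonneg (by positivity), inv_pow, inv_inv, mul_comm]

end Laplace

section Final
open MeasureTheory Set Filter Topology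

lemma R_integral (m k : ℕ) : (R (m + k) k : ℝ) * (2 ^ m * m.factorial) =
    ((2 * m + k).factorial : ℝ) * Jm k m := by
  classical
  have hs := congrArg (Nat.cast (R := ℝ)) (R_sum m k)
  push_cast at hs
  rw [hs]
  have hsum : ∀ g : Fin (2 * m) → Fin (k + 1), ∑ a, Fintype.card {i // g i = a} = 2 * m := by
    intro g
    rw [← Fintype.card_sigma, Fintype.card_congr (Equiv.sigmaFiberEquiv g)]
    simp
  have hprod : ∀ (g : Fin (2 * m) → Fin (k + 1)) (x : Fin (k + 1) → ℝ),
      ∏ a, x a ^ Fintype.card {i // g i = a} = ∏ i, x (g i) := by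
    intro g x
    rw [← Finset.prod_fiberwise Finset.univ g]
    apply Finset.prod_congr rfl
    intro a _
    rw [Fintype.card_subtype, ← Finset.prod_const]
    apply Finset.prod_congr rfl
    intro i hi
    rw [(Finset.mem_filter.mp hi).2]
  have h1 : ENNReal.ofReal (∑ g ∈ Finset.univ.filter (fun g : Fin (2 * m) → Fin (k + 1) => ∀ i, g (phi m i) ≠ g i),
      ∏ a : Fin (k + 1), ((Fintype.card {i // g i = a}).factorial : ℝ)) =
      ENNReal.ofReal ((2 * m + k).factorial : ℝ) *
        ∫⁻ u in simp_set k, ENNReal.ofReal ((1 - ∑ a, bary u a ^ 2) ^ m) := by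
    rw [ENNReal.ofReal_sum_of_nonneg (fun g _ => by positivity)]
    simp_rw [dirichlet, hsum, hprod]
    rw [← Finset.mul_sum, ← lintegral_finsetSum]
    · congr 1
      apply setLIntegral_congr_fun (simp_set_meas k)
      intro u hu
      simp only
      rw [← ENNReal.ofReal_sum_of_nonneg (fun g _ => Finset.prod_nonneg fun i _ => (hu _).le),
        sum_prod, bary_sum, one_pow]
    · intro g _
      have := bary_cont (k := k)
      apply Measurable.ennreal_ofReal
      apply Continuous.measurable
      fun_prop
  have h2 := congrArg ENNReal.toReal h1
  rw [ENNReal.toReal_ofReal (Finset.sum_nonneg fun g _ => by positivity), ENNReal.toReal_mul,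
    ENNReal.toReal_ofReal (by positivity)] at h2
  rw [h2]
  congr 1
  unfold Jm
  rw [integral_eq_lintegral_of_nonneg_ae]
  · filter_upwards [ae_restrict_mem (simp_set_meas k)] with u hu
    exact pow_nonneg (bary_sq_le hu) m
  · apply Continuous.aestronglyMeasurable
    have := bary_cont (k := k)
    fun_prop

lemma stir : Tendsto (fun n : ℕ => (n.factorial : ℝ) / (Real.sqrt (2 * n * Real.pi) * (n / Real.exp 1) ^ n))
    atTop (𝓝 1) := by
  have h := Stirling.factorial_isEquivalent_stirling
  rw [Asymptotics.isEquivalent_iff_tendsto_one] at h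
  · exact h
  · filter_upwards [eventually_gt_atTop 0] with n hn
    have : (0 : ℝ) < n := by exact_mod_cast hn
    positivity

lemma fact_ratio (k : ℕ) : Tendsto (fun m : ℕ => ((2 * m + k).factorial : ℝ) /
    ((2 * m).factorial * (2 * m : ℝ) ^ k)) atTop (𝓝 1) := by
  induction k with
  | zero =>
    refine tendsto_const_nhds.congr fun m => ?_
    have : ((2 * m).factorial : ℝ) ≠ 0 := by positivity
    simp [this]
  | succ k ih =>
    have h1 : Tendsto (fun m : ℕ => 1 + ((k : ℝ) + 1) / 2 / (m : ℝ)) atTop (𝓝 (1 + 0)) :=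
      (tendsto_const_div_atTop_nhds_zero_nat _).const_add _
    have h2 := ih.mul h1
    rw [add_zero, mul_one] at h2
    refine h2.congr' ?_
    filter_upwards [eventually_gt_atTop 0] with m hm
    have : (0 : ℝ) < m := by exact_mod_cast hm
    rw [← add_assoc, Nat.factorial_succ]
    push_cast
    field_simp
    ring

/-- the comparison function in factored form -/
noncomputable def Aform (k m : ℕ) : ℝ :=
  (Real.sqrt (2 * (2 * m : ℕ) * Real.pi) * ((2 * m : ℕ) / Real.exp 1) ^ (2 * m)) * (2 * m : ℝ) ^ k /
    (2 ^ m * (Real.sqrt (2 * m * Real.pi) * (m / Real.exp 1) ^ m)) *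
    ((Real.sqrt m ^ k * (((k : ℝ) + 1) / k) ^ m)⁻¹ *
      (Real.sqrt (Real.pi / (((k : ℝ) + 1) / k)) ^ k / Real.sqrt (k + 1)))

lemma rpow_half_mul (x : ℝ) (hx : 0 < x) (m k : ℕ) :
    x ^ ((m : ℝ) + (k : ℝ) / 2) = x ^ m * Real.sqrt x ^ k := by
  rw [Real.rpow_add hx, Real.rpow_natCast, Real.sqrt_eq_rpow, ← Real.rpow_natCast (x ^ (1 / 2 : ℝ)),
    ← Real.rpow_mul hx.le]
  congr 2
  ring

lemma Aform_eq {k m : ℕ} (hk : 1 ≤ k) (hm : 0 < m) :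
    ((k : ℝ) + 1) ^ (-(1 / 2 : ℝ)) * (2 : ℝ) ^ (((m + k : ℕ) : ℝ) + 1 / 2) *
          Real.exp ((k : ℝ) - ((m + k : ℕ) : ℝ)) * (k : ℝ) ^ (((m + k : ℕ) : ℝ) - (k : ℝ) / 2) *
          Real.pi ^ ((k : ℝ) / 2) *
          ((((m + k : ℕ) : ℝ) - (k : ℝ)) / ((k : ℝ) + 1)) ^ (((m + k : ℕ) : ℝ) - (k : ℝ) / 2) =
      Aform k m := by
  have hk' : (0 : ℝ) < k := by exact_mod_cast hk
  have hm' : (0 : ℝ) < m := by exact_mod_cast hm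
  have hK : (0 : ℝ) < (k : ℝ) + 1 := by positivity
  have hpi := Real.pi_pos
  have e1 : ((m + k : ℕ) : ℝ) - (k : ℝ) / 2 = (m : ℝ) + (k : ℝ) / 2 := by push_cast; ring
  have e2 : ((m + k : ℕ) : ℝ) - (k : ℝ) = m := by push_cast; ring
  have e3 : (k : ℝ) - ((m + k : ℕ) : ℝ) = -(m : ℝ) := by push_cast; ring
  have e4 : (2 : ℝ) ^ (((m + k : ℕ) : ℝ) + 1 / 2) = 2 ^ m * 2 ^ k * Real.sqrt 2 := by
    have := rpow_half_mul 2 (by norm_num) (m + k) 1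
    rw [Nat.cast_one] at this
    rw [this, pow_one, pow_add]
  have e5 : Real.pi ^ ((k : ℝ) / 2) = Real.sqrt Real.pi ^ k := by
    have := rpow_half_mul Real.pi hpi 0 k
    simpa using this
  have e6 : ((k : ℝ) + 1) ^ (-(1 / 2 : ℝ)) = (Real.sqrt (k + 1))⁻¹ := by
    rw [Real.rpow_neg hK.le, Real.sqrt_eq_rpow]
  have e7 : Real.exp (-(m : ℝ)) = (Real.exp 1 ^ m)⁻¹ := by
    rw [Real.exp_neg, ← Real.exp_nat_mul, mul_one]
  rw [e1, e2, e3, e4, e5, e6, e7, rpow_half_mul _ hk', rpow_half_mul _ (by positivity)]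
  unfold Aform
  have f1 : Real.sqrt (2 * (2 * m : ℕ) * Real.pi) = Real.sqrt 2 * Real.sqrt (2 * m * Real.pi) := by
    rw [← Real.sqrt_mul (by norm_num)]
    push_cast
    congr 1; ring
  have f2 : Real.sqrt (Real.pi / (((k : ℝ) + 1) / k)) =
      Real.sqrt Real.pi * Real.sqrt k / Real.sqrt (k + 1) := by
    rw [← Real.sqrt_mul hpi.le, ← Real.sqrt_div (by positivity)]
    congr 1; field_simp
  have f3 : Real.sqrt ((m : ℝ) / (k + 1)) = Real.sqrt m / Real.sqrt (k + 1) := by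
    rw [Real.sqrt_div hm'.le]
  have f4 : (m : ℝ) ^ k = Real.sqrt m ^ k * Real.sqrt m ^ k := by
    rw [← mul_pow, Real.mul_self_sqrt hm'.le]
  have g1 : 0 < Real.sqrt (2 * m * Real.pi) := Real.sqrt_pos.mpr (by positivity)
  have g2 : 0 < Real.sqrt m := Real.sqrt_pos.mpr hm'
  have g3 : 0 < Real.sqrt ((k : ℝ) + 1) := Real.sqrt_pos.mpr hK
  have g4 : 0 < Real.exp 1 := Real.exp_pos 1
  rw [f1, f2, f3, mul_pow 2 (m : ℝ) k, f4]
  push_cast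
  simp only [div_pow, mul_pow, pow_mul]
  generalize Real.sqrt (2 * m * Real.pi) = a at *
  generalize Real.sqrt m = b at *
  generalize Real.sqrt ((k : ℝ) + 1) = d at *
  generalize Real.exp 1 = e at *
  field_simp
  ring_nf
  rw [show (4:ℝ)^m = 2^(m*2) by rw [mul_comm, pow_mul]; norm_num]

end Final

theorem R_asymptotic (k : ℕ) (hk : 1 ≤ k) :
    Filter.Tendsto
      (fun n : ℕ => (R n k : ℝ) /
        (((k : ℝ) + 1) ^ (-(1 / 2 : ℝ)) * (2 : ℝ) ^ ((n : ℝ) + 1 / 2) *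
          Real.exp ((k : ℝ) - (n : ℝ)) * (k : ℝ) ^ ((n : ℝ) - (k : ℝ) / 2) *
          Real.pi ^ ((k : ℝ) / 2) *
          (((n : ℝ) - (k : ℝ)) / ((k : ℝ) + 1)) ^ ((n : ℝ) - (k : ℝ) / 2)))
      Filter.atTop (nhds 1) := by
  rw [← Filter.tendsto_add_atTop_iff_nat k]
  have hk' : (0 : ℝ) < k := by exact_mod_cast hk
  have hK : (0 : ℝ) < (k : ℝ) + 1 := by positivity
  have hG : 0 < Real.sqrt (Real.pi / (((k : ℝ) + 1) / k)) ^ k / Real.sqrt (k + 1) := by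
    have := Real.pi_pos
    have h1 : 0 < Real.sqrt (Real.pi / (((k : ℝ) + 1) / k)) := Real.sqrt_pos.mpr (by positivity)
    have h2 : 0 < Real.sqrt ((k : ℝ) + 1) := Real.sqrt_pos.mpr hK
    positivity
  have t1 := fact_ratio k
  have t2 : Filter.Tendsto (fun m : ℕ => 2 * m) Filter.atTop Filter.atTop :=
    Filter.tendsto_id.const_mul_atTop' (by norm_num)
  have t3 := stir.comp t2
  have t4 := (laplace hk).div_const
    (Real.sqrt (Real.pi / (((k : ℝ) + 1) / k)) ^ k / Real.sqrt (k + 1))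
  rw [div_self hG.ne'] at t4
  have t5 := ((t1.mul t3).mul t4).div stir one_ne_zero
  simp only [mul_one, div_one] at t5
  refine t5.congr' ?_
  filter_upwards [Filter.eventually_gt_atTop 0] with m hm
  have hm' : (0 : ℝ) < m := by exact_mod_cast hm
  rw [Aform_eq hk hm]
  have hR := R_integral m k
  have hm1 : (0 : ℝ) < m.factorial := by positivity
  have hm2 : (0 : ℝ) < (2 * m).factorial := by positivity
  have hR' : (R (m + k) k : ℝ) = ((2 * m + k).factorial : ℝ) * Jm k m / (2 ^ m * m.factorial) := by
    rw [← hR]; field_simp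
  rw [hR']
  unfold Aform
  simp only [Function.comp_apply, Pi.div_apply]
  generalize Real.sqrt (Real.pi / (((k : ℝ) + 1) / k)) ^ k / Real.sqrt (k + 1) = G at *
  have q1 : 0 < Real.sqrt (2 * (2 * m : ℕ) * Real.pi) * ((2 * m : ℕ) / Real.exp 1) ^ (2 * m) := by
    have := Real.pi_pos
    have h0 : (0 : ℝ) < (2 * m : ℕ) := by exact_mod_cast (by omega : 0 < 2 * m)
    have : 0 < Real.sqrt (2 * (2 * m : ℕ) * Real.pi) := Real.sqrt_pos.mpr (by positivity)
    positivity
  have q2 : 0 < Real.sqrt (2 * m * Real.pi) * (m / Real.exp 1) ^ m := by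
    have := Real.pi_pos
    have : 0 < Real.sqrt (2 * m * Real.pi) := Real.sqrt_pos.mpr (by positivity)
    positivity
  generalize Real.sqrt (2 * (2 * m : ℕ) * Real.pi) * ((2 * m : ℕ) / Real.exp 1) ^ (2 * m) = S2 at *
  generalize Real.sqrt (2 * m * Real.pi) * (m / Real.exp 1) ^ m = S1 at *
  have q3 : 0 < Real.sqrt m ^ k := pow_pos (Real.sqrt_pos.mpr hm') k
  have q4 : 0 < (((k : ℝ) + 1) / k) ^ m := by positivity
  generalize Real.sqrt m ^ k = b at *
  generalize (((k : ℝ) + 1) / k) ^ m = d at *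
  field_simp

end ChordBubbles
end

section
/- Let k̄(n) = (Σ_{k=1}^{n} k·R_{n,k}) / (Σ_{k=1}^{n} R_{n,k}) be the mean number of short chords counted across all crystallized diagrams with n chords. Then k̄(n) · √(log n / (2n)) → 1 as n → ∞; that is, k̄(n) is asymptotic to √(2n / log n). -/
namespace ChordBubbles

/-- The mean number of short chords counted across all crystallized diagrams with `n` chords. -/
noncomputable def meanShort (n : ℕ) : ℝ :=
  (∑ k ∈ Finset.Icc 1 n, (k : ℝ) * R n k) / (∑ k ∈ Finset.Icc 1 n, (R n k : ℝ))

open Finset in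
noncomputable def PM {α : Type} [DecidableEq α] [Fintype α] (c : α → ℕ) (s : Finset α) :
    Finset (Equiv.Perm α) :=
  univ.filter fun f => (∀ i, f (f i) = i) ∧ (∀ i, i ∉ s → f i = i) ∧ (∀ i ∈ s, c (f i) ≠ c i)

open Finset in
lemma PM_bound {α : Type} [DecidableEq α] [Fintype α] (c : α → ℕ) (k : ℕ) (hc : ∀ i, c i ≤ k)
    (j : ℕ) : ∀ s : Finset α, #s = 2 * j →
    ((#(PM c s) : ℕ) : ℝ) ≤ 2 ^ j * (j.factorial : ℝ) * ((k : ℝ) / (k + 1)) ^ j := by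
  induction j with
  | zero =>
    intro s hs
    have hs0 : s = ∅ := by simpa using hs
    have : PM c s ⊆ {1} := by
      intro f hf
      simp only [PM, mem_filter, mem_univ, true_and] at hf
      simp only [mem_singleton]
      ext i
      simpa using hf.2.1 i (by simp [hs0])
    have := card_le_card this
    simp only [card_singleton] at this
    simpa using this
  | succ j ih =>
    intro s hs
    -- choose a big colour class
    have hmap : ∀ a ∈ s, c a ∈ range (k + 1) := fun a _ => by
      simpa [Nat.lt_succ_iff] using hc a
    obtain ⟨i, hi, hbig⟩ : ∃ i ∈ range (k + 1), ((#s : ℝ) / (k + 1)) ≤ #{x ∈ s | c x = i} := by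
      by_contra hcon
      push Not at hcon
      have h1 : (#s : ℝ) = ∑ i ∈ range (k + 1), (#{x ∈ s | c x = i} : ℝ) := by
        exact_mod_cast card_eq_sum_card_fiberwise hmap
      have h2 : ∑ i ∈ range (k + 1), (#{x ∈ s | c x = i} : ℝ) <
          ∑ i ∈ range (k + 1), ((#s : ℝ) / (k + 1)) :=
        sum_lt_sum_of_nonempty (by simp) hcon
      rw [sum_const, card_range, nsmul_eq_mul] at h2
      push_cast at h2
      rw [mul_div_cancel₀] at h2
      · linarith
      · positivity
    have hpos : 0 < #{x ∈ s | c x = i} := by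
      have : (0 : ℝ) < (#s : ℝ) / (k + 1) := by
        rw [hs]; push_cast; positivity
      have := this.trans_le hbig
      exact_mod_cast this
    obtain ⟨v, hv⟩ := card_pos.mp hpos
    simp only [mem_filter] at hv
    obtain ⟨hvs, hvi⟩ := hv
    set t := {w ∈ s | c w ≠ i} with ht
    have htc : (#t : ℝ) ≤ 2 * (j + 1) * (k / (k + 1)) := by
      have h1 : #{x ∈ s | c x = i} + #t = #s := by
        rw [ht]; exact card_filter_add_card_filter_not _
      have h2 : (#{x ∈ s | c x = i} : ℝ) + #t = #s := by exact_mod_cast h1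
      rw [hs] at hbig h2
      push_cast at hbig h2
      have h3 : (2 * ((j:ℝ) + 1)) * (k / (k + 1)) = 2 * (j + 1) - 2 * (j + 1) / (k + 1) := by
        field_simp
        ring
      rw [h3]; linarith
    have hfm : ∀ f ∈ PM c s, f v ∈ t := by
      intro f hf
      simp only [PM, mem_filter, mem_univ, true_and] at hf
      obtain ⟨h1, h2, h3⟩ := hf
      have h4 := h3 v hvs
      simp only [ht, mem_filter]
      refine ⟨?_, hvi ▸ h4⟩
      by_contra h5
      have h6 := h2 _ h5
      rw [h1] at h6
      exact h4 (by rw [← h6])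
    have hcard : (#(PM c s) : ℝ) = ∑ w ∈ t, (#{f ∈ PM c s | f v = w} : ℝ) := by
      exact_mod_cast card_eq_sum_card_fiberwise hfm
    have hfib : ∀ w ∈ t, (#{f ∈ PM c s | f v = w} : ℝ) ≤
        2 ^ j * (j.factorial : ℝ) * ((k : ℝ) / (k + 1)) ^ j := by
      intro w hw
      simp only [ht, mem_filter] at hw
      have hvw : v ≠ w := by rintro rfl; exact hw.2 hvi
      have hs' : #((s.erase v).erase w) = 2 * j := by
        rw [card_erase_of_mem (by simp [hw.1, hvw.symm]), card_erase_of_mem hvs, hs]; omega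
      refine le_trans ?_ (ih _ hs')
      norm_cast
      refine card_le_card_of_injOn (fun f => f * Equiv.swap v w) ?_ ?_
      · intro f hf
        simp only [PM, coe_filter, mem_filter, mem_univ, true_and, Set.mem_ofPred_eq] at hf ⊢
        obtain ⟨⟨h1, h2, h3⟩, h4⟩ := hf
        have h5 : f w = v := by rw [← h4, h1]
        have hx : ∀ x, x ≠ v → x ≠ w → f x ≠ v ∧ f x ≠ w := by
          intro x hxv hxw
          constructor
          · intro h; apply hxw; rw [← h4, ← h, h1]
          · intro h; apply hxv; rw [← h5, ← h, h1]
        have key : ∀ x, (f * Equiv.swap v w) x = if x = v then v else if x = w then w else f x := by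
          intro x
          simp only [Equiv.Perm.mul_apply]
          split_ifs with ha hb
          · subst ha; simp [h5]
          · subst hb; simp [h4]
          · rw [Equiv.swap_apply_of_ne_of_ne ha hb]
        refine ⟨?_, ?_, ?_⟩
        · intro x
          rw [key x]
          split_ifs with ha hb
          · rw [key]; simp [ha]
          · rw [key]; simp [hvw.symm, hb]
          · rw [key]; simp [hx x ha hb, h1]
        · intro x hxs
          rw [key]
          split_ifs with ha hb
          · exact ha.symm
          · exact hb.symm
          · apply h2; intro h; apply hxs; simp [h, ha, hb]
        · intro x hxs
          simp only [mem_erase] at hxs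
          rw [key]; simp only [hxs.1, hxs.2.1, if_false]
          exact h3 x hxs.2.2
      · intro f _ g _ h
        exact mul_right_cancel h
    rw [hcard]
    refine (sum_le_sum hfib).trans ?_
    rw [sum_const, nsmul_eq_mul]
    calc (#t : ℝ) * (2 ^ j * (j.factorial : ℝ) * ((k : ℝ) / (k + 1)) ^ j)
        ≤ (2 * (j + 1) * (k / (k + 1))) * (2 ^ j * (j.factorial : ℝ) * ((k : ℝ) / (k + 1)) ^ j) := by
          gcongr
      _ = _ := by
        rw [Nat.factorial_succ]; push_cast; ring


lemma bubble_exists (n : ℕ) (f : Equiv.Perm (Fin (2 * n))) (x y : ℕ) (hxy : x ≤ y)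
    (hy : y < 2 * n)
    (h : ∀ i : Fin (2 * n), x ≤ i.val → i.val ≤ y → ¬ ShortEnd n f i) :
    ∃ a b, IsBubble n f a b ∧ a ≤ x ∧ y ≤ b := by
  classical
  have hP : ∃ a, ∀ i : Fin (2 * n), a ≤ i.val → i.val ≤ y → ¬ ShortEnd n f i := ⟨x, h⟩
  have ha := Nat.find_spec hP
  have hax : Nat.find hP ≤ x := Nat.find_min' hP h
  have ham : ∀ a < Nat.find hP, ¬ ∀ i : Fin (2 * n), a ≤ i.val → i.val ≤ y → ¬ ShortEnd n f i :=
    fun a h' => Nat.find_min hP h'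
  generalize Nat.find hP = a at ha hax ham
  have hQ : ∃ t, ∀ i : Fin (2 * n), a ≤ i.val → i.val + t < 2 * n → ¬ ShortEnd n f i :=
    ⟨2 * n - 1 - y, fun i h1 h2 => ha i h1 (by omega)⟩
  have ht := Nat.find_spec hQ
  have hty : Nat.find hQ ≤ 2 * n - 1 - y := Nat.find_min' hQ (fun i h1 h2 => ha i h1 (by omega))
  have htm : ∀ t < Nat.find hQ, ¬ ∀ i : Fin (2 * n), a ≤ i.val → i.val + t < 2 * n →
    ¬ ShortEnd n f i := fun a h' => Nat.find_min hQ h'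
  generalize Nat.find hQ = t at ht hty htm
  refine ⟨a, 2 * n - 1 - t, ⟨by omega, by omega, ?_, ?_, ?_⟩, hax, by omega⟩
  · intro i h1 h2
    exact ht i h1 (by omega)
  · by_cases h0 : a = 0
    · exact Or.inl h0
    · right
      have := ham (a - 1) (by omega)
      push Not at this
      obtain ⟨i, h1, h2, h3⟩ := this
      refine ⟨i, ?_, h3⟩
      by_contra h4
      exact ha i (by omega) h2 h3
  · by_cases h0 : t = 0
    · left; omega
    · right
      have := htm (t - 1) (by omega)
      push Not at this
      obtain ⟨i, h1, h2, h3⟩ := this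
      refine ⟨i, ?_, h3⟩
      by_contra h4
      exact ht i h1 (by omega) h3

open Finset in
noncomputable def lefts (n : ℕ) (f : Equiv.Perm (Fin (2 * n))) : Finset (Fin (2 * n)) :=
  univ.filter fun i => (f i).val = i.val + 1

open Finset in
lemma card_lefts (n : ℕ) (f : Equiv.Perm (Fin (2 * n))) : #(lefts n f) = shortChords n f := by
  classical
  rw [shortChords, Nat.card_eq_fintype_card, Fintype.card_subtype, lefts]

open Finset in
noncomputable def colr (n : ℕ) (A : Finset (Fin (2 * n))) (v : Fin (2 * n)) : ℕ :=
  #{a ∈ A | a < v}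

lemma colr_ne_aux (n : ℕ) (f : Equiv.Perm (Fin (2 * n))) (hf : IsDiagram n f)
    (hc : Crystallized n f) (x : Fin (2 * n)) (hx : ¬ ShortEnd n f x) (hlt : x < f x) :
    colr n (lefts n f) x < colr n (lefts n f) (f x) := by
  classical
  have hfx : ¬ ShortEnd n f (f x) := by
    intro h
    unfold ShortEnd at h hx
    rw [hf.1] at h
    omega
  have hex : ∃ j : Fin (2 * n), x.val ≤ j.val ∧ j.val ≤ (f x).val ∧ ShortEnd n f j := by
    by_contra hcon
    push Not at hcon
    obtain ⟨a, b, hab, h1, h2⟩ := bubble_exists n f x (f x) (le_of_lt hlt) (f x).2 hcon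
    have hlt' : x.val < (f x).val := hlt
    exact hc a b hab x h1 (by omega) ⟨by omega, h2⟩
  obtain ⟨j, h1, h2, h3⟩ := hex
  have hjx : j ≠ x := by rintro rfl; exact hx h3
  have hjy : j ≠ f x := by rintro rfl; exact hfx h3
  have hjx' : j.val ≠ x.val := fun h => hjx (Fin.ext h)
  have hjy' : j.val ≠ (f x).val := fun h => hjy (Fin.ext h)
  obtain ⟨a, ha, hax, hay⟩ : ∃ a ∈ lefts n f, x ≤ a ∧ a < f x := by
    rcases h3 with h3 | h3
    · exact ⟨j, by simp [lefts, h3], h1, by rw [Fin.lt_def]; omega⟩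
    · refine ⟨f j, by simp [lefts, hf.1, h3], ?_, ?_⟩
      · rw [Fin.le_def]; omega
      · rw [Fin.lt_def]; omega
  unfold colr
  apply Finset.card_lt_card
  rw [Finset.ssubset_iff_of_subset]
  · refine ⟨a, by simp [ha, hay], ?_⟩
    simp [ha, hax]
  · intro b hb
    simp only [Finset.mem_filter] at hb ⊢
    exact ⟨hb.1, hb.2.trans hlt⟩

lemma colr_ne (n : ℕ) (f : Equiv.Perm (Fin (2 * n))) (hf : IsDiagram n f)
    (hc : Crystallized n f) (x : Fin (2 * n)) (hx : ¬ ShortEnd n f x) :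
    colr n (lefts n f) (f x) ≠ colr n (lefts n f) x := by
  rcases lt_trichotomy x (f x) with h | h | h
  · exact (colr_ne_aux n f hf hc x hx h).ne'
  · exact absurd h.symm (hf.2 x)
  · have hfx : ¬ ShortEnd n f (f x) := by
      intro h
      unfold ShortEnd at h hx
      rw [hf.1] at h
      omega
    have := colr_ne_aux n f hf hc (f x) hfx (by rwa [hf.1])
    rw [hf.1] at this
    exact this.ne

open Finset in
noncomputable def nonsh (n : ℕ) (A : Finset (Fin (2 * n))) : Finset (Fin (2 * n)) :=
  by classical exact univ.filter fun i => i ∉ A ∧ ∀ a ∈ A, a.val + 1 ≠ i.val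

lemma mem_nonsh (n : ℕ) (f : Equiv.Perm (Fin (2 * n))) (hf : IsDiagram n f) (i : Fin (2 * n)) :
    i ∈ nonsh n (lefts n f) ↔ ¬ ShortEnd n f i := by
  classical
  unfold nonsh ShortEnd lefts
  simp only [Finset.mem_filter, Finset.mem_univ, true_and, not_or]
  refine and_congr Iff.rfl ⟨fun h h' => ?_, fun h a ha h' => ?_⟩
  · exact h (f i) (by rw [hf.1]; exact h'.symm) h'
  · apply h
    have : f a = i := Fin.ext (by omega)
    rw [← this, hf.1, this]; omega

open Finset in
lemma card_nonsh (n : ℕ) (f : Equiv.Perm (Fin (2 * n))) (hf : IsDiagram n f) :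
    #(nonsh n (lefts n f)) + 2 * #(lefts n f) = 2 * n := by
  classical
  have h1 : nonsh n (lefts n f) = univ \ (lefts n f ∪ (lefts n f).image f) := by
    ext i
    rw [mem_nonsh n f hf]
    simp only [ShortEnd, mem_sdiff, mem_univ, true_and, mem_union, lefts, mem_filter, mem_image]
    refine not_congr (or_congr Iff.rfl ⟨fun h => ⟨f i, by rw [hf.1]; exact h.symm, hf.1 i⟩, ?_⟩)
    rintro ⟨a, ha, rfl⟩
    rw [hf.1]; exact ha.symm
  have hd : Disjoint (lefts n f) ((lefts n f).image f) := by
    rw [disjoint_left]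
    intro i hi hi'
    simp only [lefts, mem_filter, mem_univ, true_and, mem_image] at hi hi'
    obtain ⟨a, ha, rfl⟩ := hi'
    rw [hf.1] at hi
    omega
  have h2 : #(lefts n f ∪ (lefts n f).image f) = 2 * #(lefts n f) := by
    rw [card_union_of_disjoint hd, card_image_of_injective _ f.injective]; ring
  have h3 := card_sdiff_add_card_eq_card (subset_univ (lefts n f ∪ (lefts n f).image f))
  rw [← h1, h2] at h3
  simpa using h3

open Finset in
lemma R_upper (n k : ℕ) (hk : k ≤ n) :
    (R n k : ℝ) ≤ ((2 * n).choose k : ℝ) *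
      (2 ^ (n - k) * ((n - k).factorial : ℝ) * ((k : ℝ) / (k + 1)) ^ (n - k)) := by
  classical
  set C : Finset (Equiv.Perm (Fin (2 * n))) :=
    univ.filter fun f => IsDiagram n f ∧ Crystallized n f ∧ shortChords n f = k with hC
  have hR : R n k = #C := by
    rw [R, Nat.card_eq_fintype_card, Fintype.card_subtype]
  have hmaps : ∀ f ∈ C, lefts n f ∈ powersetCard k (univ : Finset (Fin (2 * n))) := by
    intro f hf
    simp only [hC, mem_filter, mem_univ, true_and] at hf
    simp [mem_powersetCard, card_lefts, hf.2.2]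
  have hcard : (#C : ℝ) = ∑ A ∈ powersetCard k (univ : Finset (Fin (2 * n))),
      (#{f ∈ C | lefts n f = A} : ℝ) := by
    exact_mod_cast card_eq_sum_card_fiberwise hmaps
  have hfib : ∀ A ∈ powersetCard k (univ : Finset (Fin (2 * n))),
      (#{f ∈ C | lefts n f = A} : ℝ) ≤
      (2 ^ (n - k) * ((n - k).factorial : ℝ) * ((k : ℝ) / (k + 1)) ^ (n - k)) := by
    intro A hA
    rw [mem_powersetCard] at hA
    rcases Finset.eq_empty_or_nonempty {f ∈ C | lefts n f = A} with he | ⟨f0, hf0⟩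
    · rw [he]; simp; positivity
    · simp only [hC, mem_filter, mem_univ, true_and] at hf0
      obtain ⟨⟨hf0, -, -⟩, hfA⟩ := hf0
      have hcs := card_nonsh n f0 hf0
      rw [hfA, hA.2] at hcs
      refine le_trans ?_ (PM_bound (colr n A) k ?_ (n - k) (nonsh n A) (by omega))
      · norm_cast
        refine card_le_card_of_injOn
          (fun f => if h : IsDiagram n f ∧ lefts n f = A then
            Function.Involutive.toPerm (fun i => if i ∈ nonsh n A then f i else i) ?_ else 1) ?_ ?_
        · obtain ⟨hf, rfl⟩ := h
          intro i
          by_cases hi : i ∈ nonsh n (lefts n f)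
          · have hi' : f i ∈ nonsh n (lefts n f) := by
              rw [mem_nonsh n f hf] at hi ⊢
              unfold ShortEnd at hi ⊢
              rw [hf.1]; omega
            simp [hi, hi', hf.1]
          · simp [hi]
        · intro f hf
          simp only [hC, coe_filter, mem_filter, mem_univ, true_and, Set.mem_ofPred_eq] at hf
          obtain ⟨⟨hf, hc, hs⟩, rfl⟩ := hf
          simp only [PM, coe_filter, mem_univ, true_and, Set.mem_ofPred_eq, hf, and_self, dite_true]
          refine ⟨?_, ?_, ?_⟩
          · intro i
            rw [Function.Involutive.toPerm_involutive]
          · intro i hi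
            simp [Function.Involutive.coe_toPerm, hi]
          · intro i hi
            simp only [Function.Involutive.coe_toPerm, hi, if_true]
            exact colr_ne n f hf hc i ((mem_nonsh n f hf i).1 hi)
        · intro f hf g hg h
          simp only [hC, coe_filter, mem_filter, mem_univ, true_and, Set.mem_ofPred_eq] at hf hg
          obtain ⟨⟨hf, -, -⟩, hA1⟩ := hf
          obtain ⟨⟨hg, -, -⟩, hA2⟩ := hg
          simp only [hf, hg, hA1, hA2, and_self, dite_true] at h
          ext i
          by_cases hi : i ∈ nonsh n A
          · have := congrArg (fun p => (p : Equiv.Perm (Fin (2 * n))) i) h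
            simp only [Function.Involutive.coe_toPerm, hi, if_true] at this
            rw [this]
          · have h1 := hi
            rw [← hA1, mem_nonsh n f hf, not_not] at h1
            have hmem : ∀ j, (f j).val = j.val + 1 ↔ (g j).val = j.val + 1 := by
              intro j
              have := Finset.ext_iff.1 (hA1.trans hA2.symm) j
              simpa [lefts] using this
            rcases h1 with h1 | h1
            · rw [h1, (hmem i).1 h1]
            · have h2 := (hmem (f i)).1 (by rw [hf.1]; omega)
              have h3 : g (f i) = i := Fin.ext (by omega)
              have h4 : g (g (f i)) = g i := congrArg g h3
              rw [hg.1] at h4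
              rw [h4]
      · intro i
        rw [← hA.2]
        exact card_filter_le _ _
  rw [hR, hcard]
  refine (sum_le_sum hfib).trans ?_
  rw [sum_const, card_powersetCard, nsmul_eq_mul]
  simp


section lower
variable {m k : ℕ}

open Finset in
def cnt (c : Fin (2 * m) → Fin (k + 1)) (i : ℕ) : ℕ := #{v | (c v).val ≤ i}

open Finset in
lemma lt_cnt {c : Fin (2 * m) → Fin (k + 1)} (hc : Monotone c) (i : ℕ) (v : Fin (2 * m)) :
    v.val < cnt c i ↔ (c v).val ≤ i := by
  unfold cnt
  constructor
  · intro h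
    by_contra h'
    have : ({v | (c v).val ≤ i} : Finset (Fin (2 * m))) ⊆ Iio v := by
      intro w hw
      simp only [mem_filter, mem_univ, true_and] at hw
      rw [mem_Iio]
      by_contra h2
      have := hc (not_lt.1 h2)
      rw [Fin.le_def] at this
      omega
    have := card_le_card this
    rw [Fin.card_Iio] at this
    omega
  · intro h
    have : Iic v ⊆ ({v | (c v).val ≤ i} : Finset (Fin (2 * m))) := by
      intro w hw
      rw [mem_Iic] at hw
      have := hc hw
      rw [Fin.le_def] at this
      simp only [mem_filter, mem_univ, true_and]
      omega
    have := card_le_card this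
    rw [Fin.card_Iic] at this
    omega

open Finset in
lemma cnt_le (c : Fin (2 * m) → Fin (k + 1)) (i : ℕ) : cnt c i ≤ 2 * m := by
  unfold cnt
  simpa using card_filter_le (univ : Finset (Fin (2 * m))) (fun v => (c v).val ≤ i)

open Finset in
lemma cnt_mono (c : Fin (2 * m) → Fin (k + 1)) {i j : ℕ} (h : i ≤ j) : cnt c i ≤ cnt c j := by
  unfold cnt
  apply card_le_card
  intro v hv
  simp only [mem_filter, mem_univ, true_and] at hv ⊢
  omega

def pos (c : Fin (2 * m) → Fin (k + 1)) : Fin (2 * m) ⊕ (Fin k × Bool) → ℕ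
  | Sum.inl v => v.val + 2 * (c v).val
  | Sum.inr (i, b) => cnt c i.val + 2 * i.val + b.toNat

lemma pos_lt (c : Fin (2 * m) → Fin (k + 1)) (x : Fin (2 * m) ⊕ (Fin k × Bool)) :
    pos c x < 2 * (m + k) := by
  rcases x with v | ⟨i, b⟩
  · have := v.2; have := (c v).2; simp only [pos]; omega
  · have := i.2; have := cnt_le c i.val; have := b.toNat_le; simp only [pos]; omega

lemma pos_lr {c : Fin (2 * m) → Fin (k + 1)} (hc : Monotone c) (v : Fin (2 * m)) (i : Fin k) :
    ((c v).val ≤ i.val → pos c (Sum.inl v) < pos c (Sum.inr (i, false))) ∧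
    (i.val < (c v).val → pos c (Sum.inr (i, false)) + 2 ≤ pos c (Sum.inl v)) := by
  have := lt_cnt hc i.val v
  simp only [pos, Bool.toNat_false]
  constructor
  · intro h; have := this.2 h; omega
  · intro h
    have : ¬ v.val < cnt c i.val := fun h' => by have := this.1 h'; omega
    omega

lemma pos_inr_true (c : Fin (2 * m) → Fin (k + 1)) (i : Fin k) :
    pos c (Sum.inr (i, true)) = pos c (Sum.inr (i, false)) + 1 := by simp [pos]

lemma pos_inr_lt (c : Fin (2 * m) → Fin (k + 1)) (i j : Fin k) (h : i < j) :
    pos c (Sum.inr (i, false)) + 2 ≤ pos c (Sum.inr (j, false)) := by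
  have h' : i.val < j.val := h
  have := cnt_mono c h'.le
  simp only [pos, Bool.toNat_false]; omega

lemma pos_inl_strictMono {c : Fin (2 * m) → Fin (k + 1)} (hc : Monotone c) :
    StrictMono (fun v => pos c (Sum.inl v)) := by
  intro v w h
  have h1 := hc h.le
  rw [Fin.le_def] at h1
  rw [Fin.lt_def] at h
  simp only [pos]; omega

lemma pos_inj {c : Fin (2 * m) → Fin (k + 1)} (hc : Monotone c) : Function.Injective (pos c) := by
  have hlr : ∀ v i b, pos c (Sum.inl v) ≠ pos c (Sum.inr (i, b)) := by
    intro v i b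
    have := pos_lr hc v i
    have h2 := pos_inr_true c i
    rcases le_or_gt (c v).val i.val with h | h
    · have := this.1 h
      cases b <;> omega
    · have := this.2 h
      cases b <;> omega
  rintro (v | ⟨i, b⟩) (w | ⟨j, b'⟩) h
  · rw [(pos_inl_strictMono hc).injective h]
  · exact absurd h (hlr _ _ _)
  · exact absurd h.symm (hlr _ _ _)
  · have h1 := pos_inr_true c i
    have h2 := pos_inr_true c j
    rcases lt_trichotomy i j with h3 | h3 | h3
    · have := pos_inr_lt c i j h3
      cases b <;> cases b' <;> omega
    · subst h3
      cases b <;> cases b' <;> first | rfl | omega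
    · have := pos_inr_lt c j i h3
      cases b <;> cases b' <;> omega

noncomputable def Psi (c : Fin (2 * m) → Fin (k + 1)) (hc : Monotone c) :
    Fin (2 * m) ⊕ (Fin k × Bool) ≃ Fin (2 * (m + k)) :=
  Equiv.ofBijective (fun x => ⟨pos c x, pos_lt c x⟩) (by
    rw [Fintype.bijective_iff_injective_and_card]
    constructor
    · intro x y h
      exact pos_inj hc (by simpa using h)
    · simp; ring)

lemma Psi_val (c : Fin (2 * m) → Fin (k + 1)) (hc : Monotone c) (x) :
    (Psi c hc x).val = pos c x := rfl

noncomputable def diag (c : Fin (2 * m) → Fin (k + 1)) (hc : Monotone c)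
    (g : Equiv.Perm (Fin (2 * m))) : Equiv.Perm (Fin (2 * (m + k))) :=
  (Psi c hc).permCongr (Equiv.sumCongr g (Equiv.prodCongr (Equiv.refl _) Equiv.boolNot))

lemma diag_inl (c : Fin (2 * m) → Fin (k + 1)) (hc : Monotone c) (g) (v) :
    diag c hc g (Psi c hc (Sum.inl v)) = Psi c hc (Sum.inl (g v)) := by
  simp [diag, Equiv.permCongr_apply]

lemma diag_inr (c : Fin (2 * m) → Fin (k + 1)) (hc : Monotone c) (g) (i b) :
    diag c hc g (Psi c hc (Sum.inr (i, b))) = Psi c hc (Sum.inr (i, !b)) := by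
  simp [diag, Equiv.permCongr_apply]

lemma far {c : Fin (2 * m) → Fin (k + 1)} (hc : Monotone c) (v w : Fin (2 * m))
    (h : (c v).val < (c w).val) : ∃ i : Fin k, pos c (Sum.inl v) < pos c (Sum.inr (i, false)) ∧
      pos c (Sum.inr (i, false)) + 2 ≤ pos c (Sum.inl w) :=
  ⟨⟨(c v).val, by have := (c w).2; omega⟩, (pos_lr hc v _).1 le_rfl, (pos_lr hc w _).2 h⟩

lemma short_inl {c : Fin (2 * m) → Fin (k + 1)} (hc : Monotone c) (g : Equiv.Perm (Fin (2 * m)))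
    (hg2 : ∀ v, c (g v) ≠ c v) (v) :
    ¬ ShortEnd (m + k) (diag c hc g) (Psi c hc (Sum.inl v)) := by
  unfold ShortEnd
  rw [diag_inl, Psi_val, Psi_val]
  rcases lt_or_gt_of_ne (fun h => hg2 v (Fin.ext h)) with h | h
  · obtain ⟨i, h1, h2⟩ := far hc _ _ h; omega
  · obtain ⟨i, h1, h2⟩ := far hc _ _ h; omega

lemma short_inr {c : Fin (2 * m) → Fin (k + 1)} (hc : Monotone c) (g : Equiv.Perm (Fin (2 * m)))
    (i b) : ShortEnd (m + k) (diag c hc g) (Psi c hc (Sum.inr (i, b))) := by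
  unfold ShortEnd
  rw [diag_inr, Psi_val, Psi_val]
  have := pos_inr_true c i
  cases b <;> simp [this]

open Finset in
lemma diag_good {c : Fin (2 * m) → Fin (k + 1)} (hc : Monotone c) (g : Equiv.Perm (Fin (2 * m)))
    (hg : ∀ v, g (g v) = v) (hg2 : ∀ v, c (g v) ≠ c v) :
    IsDiagram (m + k) (diag c hc g) ∧ Crystallized (m + k) (diag c hc g) ∧
      shortChords (m + k) (diag c hc g) = k := by
  classical
  refine ⟨⟨?_, ?_⟩, ?_, ?_⟩
  · intro i
    obtain ⟨x, rfl⟩ := (Psi c hc).surjective i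
    rcases x with v | ⟨i, b⟩
    · rw [diag_inl, diag_inl, hg]
    · rw [diag_inr, diag_inr, Bool.not_not]
  · intro i h
    obtain ⟨x, rfl⟩ := (Psi c hc).surjective i
    rcases x with v | ⟨i, b⟩
    · rw [diag_inl] at h
      have := (Psi c hc).injective h
      simp only [Sum.inl.injEq] at this
      exact hg2 v (by rw [this])
    · rw [diag_inr] at h
      have := (Psi c hc).injective h
      simp at this
  · intro a b hab i hi1 hi2 h
    obtain ⟨x, rfl⟩ := (Psi c hc).surjective i
    rcases x with v | ⟨i, b⟩
    · rw [diag_inl] at h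
      simp only [Psi_val] at hi1 hi2 h
      have key : ∀ i : Fin k, a ≤ pos c (Sum.inr (i, false)) → pos c (Sum.inr (i, false)) ≤ b →
          False := fun i h1 h2 =>
        hab.2.2.1 (Psi c hc (Sum.inr (i, false))) h1 h2 (short_inr hc g i false)
      rcases lt_or_gt_of_ne (fun h => hg2 v (Fin.ext h)) with h' | h'
      · obtain ⟨i, h1, h2⟩ := far hc _ _ h'
        exact key i (by omega) (by omega)
      · obtain ⟨i, h1, h2⟩ := far hc _ _ h'
        exact key i (by omega) (by omega)
    · exact hab.2.2.1 _ hi1 hi2 (short_inr hc g i b)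
  · rw [← card_lefts]
    have : lefts (m + k) (diag c hc g) =
        (univ : Finset (Fin k)).image (fun i => Psi c hc (Sum.inr (i, false))) := by
      ext j
      obtain ⟨x, rfl⟩ := (Psi c hc).surjective j
      simp only [lefts, mem_filter, mem_univ, true_and, mem_image]
      constructor
      · intro h
        rcases x with v | ⟨i, b⟩
        · exact absurd (Or.inl h) (short_inl hc g hg2 v)
        · cases b
          · exact ⟨i, rfl⟩
          · rw [diag_inr, Psi_val, Psi_val, pos_inr_true] at h
            simp at h
            omega
      · rintro ⟨i, h⟩
        rw [← h, diag_inr, Psi_val, Psi_val]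
        exact pos_inr_true c i
    rw [this, card_image_of_injective]
    · simp
    · intro i j h
      simpa using (Psi c hc).injective h

lemma diag_inj {c c' : Fin (2 * m) → Fin (k + 1)} (hc : Monotone c) (hc' : Monotone c')
    (g g' : Equiv.Perm (Fin (2 * m))) (hg : ∀ v, c (g v) ≠ c v) (hg' : ∀ v, c' (g' v) ≠ c' v)
    (h : diag c hc g = diag c' hc' g') : c = c' ∧ g = g' := by
  have hr : ∀ {c : Fin (2 * m) → Fin (k + 1)} (hc : Monotone c) (g : Equiv.Perm (Fin (2 * m)))
      (_ : ∀ v, c (g v) ≠ c v), Set.range (fun v => Psi c hc (Sum.inl v)) =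
        {j | ¬ ShortEnd (m + k) (diag c hc g) j} := by
    intro c hc g hg
    ext j
    obtain ⟨x, rfl⟩ := (Psi c hc).surjective j
    simp only [Set.mem_range, EmbeddingLike.apply_eq_iff_eq, Set.mem_ofPred_eq]
    rcases x with v | ⟨i, b⟩
    · simp [short_inl hc g hg]
    · simp [short_inr hc g]
  have hs : ∀ {c : Fin (2 * m) → Fin (k + 1)} (hc : Monotone c),
      StrictMono (fun v => Psi c hc (Sum.inl v)) := by
    intro c hc v w h
    rw [Fin.lt_def]
    exact pos_inl_strictMono hc h
  have h1 : (fun v => Psi c hc (Sum.inl v)) = (fun v => Psi c' hc' (Sum.inl v)) := by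
    rw [← (hs hc).range_inj (hs hc'), hr hc g hg, hr hc' g' hg', h]
  have hcc : c = c' := by
    funext v
    have := congrArg Fin.val (congrFun h1 v)
    simp only [Psi_val, pos] at this
    apply Fin.ext; omega
  subst hcc
  refine ⟨rfl, ?_⟩
  ext v
  have h2 := diag_inl c hc g v
  rw [h, diag_inl] at h2
  have := (Psi c hc).injective h2
  simp only [Sum.inl.injEq] at this
  rw [this]

end lower


section count
variable {m k : ℕ}

def flipB (m : ℕ) : Equiv.Perm (Fin m × Bool) := Equiv.prodCongr (Equiv.refl _) Equiv.boolNot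

open Finset in
lemma flip_fiber (g : Equiv.Perm (Fin (2 * m))) :
    Nat.card {r : Fin m × Bool ≃ Fin (2 * m) // r.permCongr (flipB m) = g} ≤
      2 ^ m * m.factorial := by
  classical
  rcases isEmpty_or_nonempty {r : Fin m × Bool ≃ Fin (2 * m) // r.permCongr (flipB m) = g} with
    h | ⟨⟨r0, h0⟩⟩
  · simp
  have hstep : ∀ r : Fin m × Bool ≃ Fin (2 * m), r.permCongr (flipB m) = g →
      ∀ j b, r (j, !b) = g (r (j, b)) := by
    intro r hr j b
    rw [← hr]; simp [Equiv.permCongr_apply, flipB]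
  have hinj : ∀ r : Fin m × Bool ≃ Fin (2 * m), r.permCongr (flipB m) = g →
      Function.Injective (fun j => (r0.symm (r (j, false))).1) := by
    intro r hr j j' hjj
    simp only at hjj
    rcases hx : r0.symm (r (j, false)) with ⟨a, b⟩
    rcases hx' : r0.symm (r (j', false)) with ⟨a', b'⟩
    rw [hx, hx'] at hjj
    simp only at hjj
    subst hjj
    rw [Equiv.symm_apply_eq] at hx hx'
    by_cases hb : b = b'
    · subst hb
      have := r.injective (hx.trans hx'.symm)
      simpa using this
    · have hb' : b' = !b := by revert hb; clear hx hx'; revert b b'; decide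
      rw [hb', hstep r0 h0, ← hx, ← hstep r hr] at hx'
      have := r.injective hx'
      simp at this
  let F : {r : Fin m × Bool ≃ Fin (2 * m) // r.permCongr (flipB m) = g} →
      Equiv.Perm (Fin m) × (Fin m → Bool) := fun r =>
    (Equiv.ofBijective _ (Finite.injective_iff_bijective.1 (hinj r.1 r.2)),
      fun j => (r0.symm (r.1 (j, false))).2)
  have hF : Function.Injective F := by
    rintro ⟨r, hr⟩ ⟨r', hr'⟩ h
    simp only [F, Prod.mk.injEq] at h
    have hf : ∀ j, r (j, false) = r' (j, false) := by
      intro j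
      apply r0.symm.injective
      apply Prod.ext
      · exact congrArg (fun p => (p : Equiv.Perm (Fin m)) j) h.1
      · exact congrFun h.2 j
    apply Subtype.ext
    apply Equiv.ext
    rintro ⟨j, b⟩
    cases b
    · exact hf j
    · have h1 := hstep r hr j false
      have h2 := hstep r' hr' j false
      simp only [Bool.not_false] at h1 h2
      rw [h1, h2, hf]
  have := Nat.card_le_card_of_injective F hF
  refine this.trans ?_
  simp [Nat.card_eq_fintype_card, Fintype.card_perm, mul_comm]

lemma exists_sorted (d : Fin m × Bool → Fin (k + 1)) :
    ∃ (c : Fin (2 * m) → Fin (k + 1)) (r : Fin m × Bool ≃ Fin (2 * m)), Monotone c ∧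
      ∀ v, c (r v) = d v := by
  have e : Fin m × Bool ≃ Fin (2 * m) := Fintype.equivFinOfCardEq (by simp [mul_comm])
  refine ⟨(d ∘ e.symm) ∘ Tuple.sort (d ∘ e.symm), e.trans (Tuple.sort (d ∘ e.symm)).symm,
    Tuple.monotone_sort _, ?_⟩
  intro v
  simp

def Proper (d : Fin m × Bool → Fin (k + 1)) : Prop := ∀ j, d (j, false) ≠ d (j, true)

open Finset in
open Classical in
lemma R_lower_comb :
    ∑ d : {d : Fin m × Bool → Fin (k + 1) // Proper d},
      ∏ i, (Fintype.card {v // d.1 v = i}).factorial ≤ R (m + k) k * (2 ^ m * m.factorial) := by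
  choose c r hc hr using (exists_sorted (m := m) (k := k))
  let X := Σ d : {d : Fin m × Bool → Fin (k + 1) // Proper d},
    {τ : Equiv.Perm (Fin m × Bool) // d.1 ∘ τ = d.1}
  let rr : X → (Fin m × Bool ≃ Fin (2 * m)) := fun x => x.2.1.trans (r x.1.1)
  have hrr : ∀ (x : X) v, c x.1.1 (rr x v) = x.1.1 v := by
    intro x v
    simp only [rr, Equiv.trans_apply, hr]
    exact congrFun x.2.2 v
  let gg : X → Equiv.Perm (Fin (2 * m)) := fun x => (rr x).permCongr (flipB m)
  have hg1 : ∀ x v, gg x (gg x v) = v := by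
    intro x v
    obtain ⟨⟨j, b⟩, rfl⟩ := (rr x).surjective v
    simp [gg, Equiv.permCongr_apply, flipB]
  have hg2 : ∀ x v, c x.1.1 (gg x v) ≠ c x.1.1 v := by
    intro x v
    obtain ⟨⟨j, b⟩, rfl⟩ := (rr x).surjective v
    have : gg x (rr x (j, b)) = rr x (j, !b) := by simp [gg, Equiv.permCongr_apply, flipB]
    rw [this, hrr, hrr]
    cases b
    · exact (x.1.2 j).symm
    · exact x.1.2 j
  let C := {f : Equiv.Perm (Fin (2 * (m + k))) //
    IsDiagram (m + k) f ∧ Crystallized (m + k) f ∧ shortChords (m + k) f = k}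
  let Φ : X → C := fun x => ⟨diag (c x.1.1) (hc _) (gg x), diag_good (hc _) _ (hg1 x) (hg2 x)⟩
  have hX : Fintype.card X = ∑ d : {d : Fin m × Bool → Fin (k + 1) // Proper d},
      ∏ i, (Fintype.card {v // d.1 v = i}).factorial := by
    rw [Fintype.card_sigma]
    apply sum_congr rfl
    intro d _
    convert DomMulAct.stabilizer_card d.1
  have hRC : R (m + k) k = Fintype.card C := by
    rw [R, Nat.card_eq_fintype_card]
  rw [← hX, hRC, mul_comm, ← card_univ, ← card_univ]
  refine card_le_mul_card_image_of_maps_to (f := Φ) (fun _ _ => mem_univ _) _ ?_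
  intro f _
  rcases Finset.eq_empty_or_nonempty {x : X | Φ x = f} with he | ⟨x0, hx0⟩
  · rw [he]; simp
  refine le_trans ?_ (flip_fiber (gg x0))
  simp only [mem_filter, mem_univ, true_and] at hx0
  have hall : ∀ x, Φ x = f → c x.1.1 = c x0.1.1 ∧ gg x = gg x0 := by
    intro x hx
    exact diag_inj (hc _) (hc _) _ _ (hg2 x) (hg2 x0) (congrArg Subtype.val (hx.trans hx0.symm))
  rw [← Fintype.card_subtype, ← Nat.card_eq_fintype_card]
  refine Nat.card_le_card_of_injective (fun x => ⟨rr x.1, (hall x.1 (by simpa using x.2)).2⟩) ?_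
  rintro ⟨x, hx⟩ ⟨y, hy⟩ h
  have h1 : rr x = rr y := congrArg Subtype.val h
  have hx' := hall x (by simpa using hx)
  have hy' := hall y (by simpa using hy)
  apply Subtype.ext
  have hd : x.1 = y.1 := by
    apply Subtype.ext
    funext v
    rw [← hrr, ← hrr, h1, hx'.1, hy'.1]
  obtain ⟨d, τ⟩ := x
  obtain ⟨d', τ'⟩ := y
  simp only at hd
  subst hd
  suffices hτ : τ = τ' by subst hτ; rfl
  apply Subtype.ext
  apply Equiv.ext
  intro v
  have := congrArg (fun p => (p : Fin m × Bool ≃ Fin (2 * m)) v) h1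
  simp only [rr, Equiv.trans_apply] at this
  exact (r d.1).injective this

end count


lemma sum_pow_exp (q N : ℕ) :
    ∑ x ∈ Finset.range N, (x : ℝ) ^ q * Real.exp (-x) ≤ Real.exp 1 * (q.factorial : ℝ) := by
  have hcont : Continuous (fun t : ℝ => t ^ q * Real.exp (-t)) := by fun_prop
  have hint : ∀ a b : ℝ, IntervalIntegrable (fun t : ℝ => t ^ q * Real.exp (-t))
      MeasureTheory.volume a b := fun a b => hcont.intervalIntegrable a b
  have h1 : ∀ x : ℕ, (x : ℝ) ^ q * Real.exp (-x) ≤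
      Real.exp 1 * ∫ t in (x : ℝ)..((x + 1 : ℕ) : ℝ), t ^ q * Real.exp (-t) := by
    intro x
    rw [← intervalIntegral.integral_const_mul]
    have : (x : ℝ) ^ q * Real.exp (-x) =
        ∫ t in (x : ℝ)..((x + 1 : ℕ) : ℝ), (x : ℝ) ^ q * Real.exp (-x) := by
      rw [intervalIntegral.integral_const]; simp
    rw [this]
    apply intervalIntegral.integral_mono_on (by simp) (by simp) ((hint _ _).const_mul _)
    intro t ht
    have h2 : Real.exp (-x) ≤ Real.exp 1 * Real.exp (-t) := by
      rw [← Real.exp_add]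
      apply Real.exp_le_exp.2
      have := ht.2
      push_cast at this
      linarith
    have h3 : (x : ℝ) ^ q ≤ t ^ q := pow_le_pow_left₀ (by positivity) ht.1 q
    have h0 : (0 : ℝ) ≤ t := le_trans (by positivity) ht.1
    calc (x : ℝ) ^ q * Real.exp (-x) ≤ t ^ q * (Real.exp 1 * Real.exp (-t)) := by gcongr
      _ = _ := by ring
  have hG : MeasureTheory.IntegrableOn (fun t : ℝ => t ^ q * Real.exp (-t)) (Set.Ioi 0) := by
    have := Real.GammaIntegral_convergent (s := q + 1) (by positivity)
    refine this.congr_fun ?_ measurableSet_Ioi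
    intro t ht
    simp [mul_comm]
  have hGv : ∫ t in Set.Ioi (0 : ℝ), t ^ q * Real.exp (-t) = (q.factorial : ℝ) := by
    rw [← Real.Gamma_nat_eq_factorial, Real.Gamma_eq_integral (by positivity)]
    apply MeasureTheory.setIntegral_congr_fun measurableSet_Ioi
    intro t ht
    simp [mul_comm]
  calc ∑ x ∈ Finset.range N, (x : ℝ) ^ q * Real.exp (-x)
      ≤ ∑ x ∈ Finset.range N,
        Real.exp 1 * ∫ t in (x : ℝ)..((x + 1 : ℕ) : ℝ), t ^ q * Real.exp (-t) :=
        Finset.sum_le_sum fun x _ => h1 x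
    _ = Real.exp 1 * ∫ t in (0 : ℝ)..(N : ℝ), t ^ q * Real.exp (-t) := by
        rw [← Finset.mul_sum]
        have := intervalIntegral.sum_integral_adjacent_intervals (a := fun x : ℕ => (x : ℝ))
          (n := N) (f := fun t : ℝ => t ^ q * Real.exp (-t)) (μ := MeasureTheory.volume)
          (fun k _ => hint _ _)
        rw [this]; simp
    _ ≤ _ := by
        gcongr
        rw [← hGv, intervalIntegral.integral_of_le (by positivity)]
        apply MeasureTheory.setIntegral_mono_set hG
        · filter_upwards [MeasureTheory.ae_restrict_mem measurableSet_Ioi] with t ht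
          have : (0 : ℝ) < t := ht
          simp only [Pi.zero_apply]
          positivity
        · exact Filter.Eventually.of_forall fun t ht => ht.1

section fam
variable {k D : ℕ}

def ee (d : Fin k → Fin (D + 1)) (i : ℕ) : ℕ := if h : i < k then (d ⟨i, h⟩).val else 0

def pe (d : Fin k → Fin (D + 1)) : ℕ → ℕ
  | 0 => 0
  | i + 1 => ee d i

def xx (l : ℕ) (d : Fin k → Fin (D + 1)) (i : Fin (k + 1)) : ℕ := l + ee d i - pe d i

lemma ee_le (d : Fin k → Fin (D + 1)) (i : ℕ) : ee d i ≤ D := by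
  unfold ee
  split_ifs with h
  · have := (d ⟨i, h⟩).2; omega
  · omega

lemma pe_le (d : Fin k → Fin (D + 1)) (i : ℕ) : pe d i ≤ D := by
  cases i with
  | zero => simp [pe]
  | succ i => exact ee_le d i

lemma xx_add (l : ℕ) (hl : D ≤ l) (d : Fin k → Fin (D + 1)) (i : Fin (k + 1)) :
    xx l d i + pe d i = l + ee d i := by
  have := pe_le d i
  unfold xx; omega

lemma xx_le (l : ℕ) (d : Fin k → Fin (D + 1)) (i : Fin (k + 1)) : xx l d i ≤ l + D := by
  have := ee_le d i
  unfold xx; omega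

lemma xx_sum (l : ℕ) (hl : D ≤ l) (d : Fin k → Fin (D + 1)) :
    ∑ i, xx l d i = (k + 1) * l := by
  have h1 : ∑ i : Fin (k + 1), (xx l d i + pe d i) = ∑ i : Fin (k + 1), (l + ee d i) :=
    Finset.sum_congr rfl fun i _ => xx_add l hl d i
  rw [Finset.sum_add_distrib, Finset.sum_add_distrib, Fin.sum_univ_eq_sum_range (pe d),
    Fin.sum_univ_eq_sum_range (ee d), Finset.sum_range_succ', Finset.sum_range_succ] at h1
  have h2 : ee d k = 0 := by simp [ee]
  simp only [pe, h2, Finset.sum_const, Finset.card_univ, Fintype.card_fin, smul_eq_mul] at h1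
  omega

lemma xx_inj (l : ℕ) (hl : D ≤ l) : Function.Injective (xx l : (Fin k → Fin (D + 1)) → _) := by
  intro d d' h
  have key : ∀ i, i < k + 1 → ee d i = ee d' i := by
    intro i
    induction i with
    | zero =>
      intro hi
      have h1 := xx_add l hl d ⟨0, hi⟩
      have h2 := xx_add l hl d' ⟨0, hi⟩
      rw [h] at h1
      simp only [pe] at h1 h2
      omega
    | succ i ih =>
      intro hi
      have h0 := ih (by omega)
      have h1 := xx_add l hl d ⟨i + 1, hi⟩
      have h2 := xx_add l hl d' ⟨i + 1, hi⟩
      rw [h] at h1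
      simp only [pe] at h1 h2
      omega
  funext j
  have := key j.val (by omega)
  simp only [ee, j.2, dite_true] at this
  exact Fin.ext this

end fam

open Finset in
open Classical in
lemma proper_sum (m k : ℕ) (x : Fin (k + 1) → ℝ) :
    ∑ d : {d : Fin m × Bool → Fin (k + 1) // Proper d}, ∏ i, x i ^ (Fintype.card {v // d.1 v = i})
      = ((∑ i, x i) ^ 2 - ∑ i, x i ^ 2) ^ m := by
  have h1 : (∑ i, x i) ^ 2 - ∑ i, x i ^ 2 =
      ∑ p ∈ (univ : Finset (Fin (k + 1) × Fin (k + 1))).filter (fun p => p.1 ≠ p.2),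
        x p.1 * x p.2 := by
    have h2 := sum_filter_add_sum_filter_not (univ : Finset (Fin (k + 1) × Fin (k + 1)))
      (fun p => p.1 ≠ p.2) (fun p => x p.1 * x p.2)
    have h3 : ∑ p : Fin (k + 1) × Fin (k + 1), x p.1 * x p.2 = (∑ i, x i) ^ 2 := by
      rw [Fintype.sum_prod_type, sq, sum_mul_sum]
    have h4 : ∑ p ∈ (univ : Finset (Fin (k + 1) × Fin (k + 1))).filter (fun p => ¬ p.1 ≠ p.2),
        x p.1 * x p.2 = ∑ i, x i ^ 2 := by
      refine sum_bij' (fun p _ => p.1) (fun i _ => (i, i)) ?_ ?_ ?_ ?_ ?_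
      · simp
      · simp
      · rintro ⟨a, b⟩ h; simp at h; simp [h]
      · simp
      · rintro ⟨a, b⟩ h; simp at h; simp [h, sq]
    rw [h3, h4] at h2
    linarith
  have h5 : ((∑ i, x i) ^ 2 - ∑ i, x i ^ 2) ^ m = ∏ _j : Fin m, ((∑ i, x i) ^ 2 - ∑ i, x i ^ 2) := by
    simp
  rw [h5, h1, prod_univ_sum]
  refine sum_bij' (fun d _ => fun j => (d.1 (j, false), d.1 (j, true)))
    (fun u hu => ⟨fun v => if v.2 then (u v.1).2 else (u v.1).1, ?_⟩) ?_ ?_ ?_ ?_ ?_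
  · intro j
    simp only [Fintype.mem_piFinset, mem_filter, mem_univ, true_and] at hu
    simpa using hu j
  · intro d _
    simp only [Fintype.mem_piFinset, mem_filter, mem_univ, true_and]
    exact d.2
  · simp
  · intro d _
    apply Subtype.ext
    funext ⟨j, b⟩
    cases b <;> simp
  · intro u _
    funext j
    simp
  · intro d _
    have : ∏ i, x i ^ (Fintype.card {v // d.1 v = i}) = ∏ v, x (d.1 v) := by
      rw [← prod_fiberwise' univ d.1 x]
      refine prod_congr rfl fun i _ => ?_
      rw [prod_const, Fintype.card_subtype]
    rw [this, Fintype.prod_prod_type]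
    refine prod_congr rfl fun j _ => ?_
    simp [mul_comm]

open Finset in
open Classical in
lemma R_lower (m k l D : ℕ) (hl : D ≤ l)
    (hpos : 0 ≤ ((k + 1 : ℝ) * l) ^ 2 - (k + 1) * (l + D : ℝ) ^ 2) :
    ((D : ℝ) + 1) ^ k * (((k + 1 : ℝ) * l) ^ 2 - (k + 1) * (l + D : ℝ) ^ 2) ^ m ≤
      R (m + k) k * (2 ^ m * m.factorial) * (Real.exp (k + 1) * Real.exp ((k + 1) * l)) := by
  have hsum : ∀ d : Fin k → Fin (D + 1), ∑ i, (xx l d i : ℝ) = (k + 1) * l := by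
    intro d
    exact_mod_cast xx_sum l hl d
  have h1 : ∀ d : Fin k → Fin (D + 1),
      (((k + 1 : ℝ) * l) ^ 2 - (k + 1) * (l + D : ℝ) ^ 2) ^ m ≤
      ∑ a : {a : Fin m × Bool → Fin (k + 1) // Proper a},
        ∏ i, (xx l d i : ℝ) ^ (Fintype.card {v // a.1 v = i}) := by
    intro d
    rw [proper_sum m k (fun i => (xx l d i : ℝ)), hsum]
    apply pow_le_pow_left₀ hpos
    have : ∑ i, (xx l d i : ℝ) ^ 2 ≤ ∑ _i : Fin (k + 1), (l + D : ℝ) ^ 2 := by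
      apply sum_le_sum
      intro i _
      have : (xx l d i : ℝ) ≤ l + D := by exact_mod_cast xx_le l d i
      gcongr
    rw [sum_const, card_univ, Fintype.card_fin, nsmul_eq_mul] at this
    push_cast at this
    linarith
  have h2 : ∀ q : Fin (k + 1) → ℕ, ∑ d : Fin k → Fin (D + 1), ∏ i, (xx l d i : ℝ) ^ q i ≤
      (Real.exp (k + 1) * Real.exp ((k + 1) * l)) * ∏ i, ((q i).factorial : ℝ) := by
    intro q
    have ha : ∀ d : Fin k → Fin (D + 1), ∏ i, (xx l d i : ℝ) ^ q i =
        Real.exp ((k + 1) * l) * ∏ i, ((xx l d i : ℝ) ^ q i * Real.exp (-(xx l d i : ℝ))) := by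
      intro d
      rw [prod_mul_distrib, ← Real.exp_sum, sum_neg_distrib, hsum, mul_left_comm, ← Real.exp_add]
      simp
    simp_rw [ha]
    rw [← mul_sum]
    have hb : ∑ d : Fin k → Fin (D + 1),
        ∏ i, ((xx l d i : ℝ) ^ q i * Real.exp (-(xx l d i : ℝ))) ≤
        ∑ y ∈ Fintype.piFinset (fun _ : Fin (k + 1) => range (l + D + 1)),
          ∏ i, ((y i : ℝ) ^ q i * Real.exp (-(y i : ℝ))) := by
      rw [← sum_image (f := fun y : Fin (k + 1) → ℕ => ∏ i, ((y i : ℝ) ^ q i * Real.exp (-(y i : ℝ))))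
        (s := univ) (g := xx l) (fun a _ b _ h => xx_inj l hl h)]
      apply sum_le_sum_of_subset_of_nonneg
      · intro y hy
        simp only [mem_image, mem_univ, true_and] at hy
        obtain ⟨d, rfl⟩ := hy
        simp only [Fintype.mem_piFinset, mem_range]
        intro i
        have := xx_le l d i
        omega
      · intros
        positivity
    have hc : ∑ y ∈ Fintype.piFinset (fun _ : Fin (k + 1) => range (l + D + 1)),
          ∏ i, ((y i : ℝ) ^ q i * Real.exp (-(y i : ℝ))) ≤
          Real.exp (k + 1) * ∏ i, ((q i).factorial : ℝ) := by
      rw [← prod_univ_sum (fun _ : Fin (k + 1) => range (l + D + 1))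
        (fun i y => ((y : ℝ) ^ q i * Real.exp (-(y : ℝ))))]
      calc ∏ i : Fin (k + 1), ∑ y ∈ range (l + D + 1), ((y : ℝ) ^ q i * Real.exp (-(y : ℝ)))
          ≤ ∏ i : Fin (k + 1), (Real.exp 1 * ((q i).factorial : ℝ)) := by
            apply prod_le_prod
            · intros; positivity
            · intro i _
              exact sum_pow_exp _ _
        _ = _ := by
          rw [prod_mul_distrib, prod_const, card_univ, Fintype.card_fin, ← Real.exp_nat_mul]
          push_cast
          ring_nf
    calc _ ≤ Real.exp ((k + 1) * l) * (Real.exp (k + 1) * ∏ i, ((q i).factorial : ℝ)) := by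
          gcongr
          exact hb.trans hc
      _ = _ := by ring
  have h3 : (∑ a : {a : Fin m × Bool → Fin (k + 1) // Proper a},
      ∏ i, ((Fintype.card {v // a.1 v = i}).factorial : ℝ)) ≤
      R (m + k) k * (2 ^ m * m.factorial) := by
    exact_mod_cast R_lower_comb (m := m) (k := k)
  calc ((D : ℝ) + 1) ^ k * (((k + 1 : ℝ) * l) ^ 2 - (k + 1) * (l + D : ℝ) ^ 2) ^ m
      = ∑ _d : Fin k → Fin (D + 1), (((k + 1 : ℝ) * l) ^ 2 - (k + 1) * (l + D : ℝ) ^ 2) ^ m := by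
        rw [sum_const, card_univ, nsmul_eq_mul]; simp
    _ ≤ ∑ d : Fin k → Fin (D + 1), ∑ a : {a : Fin m × Bool → Fin (k + 1) // Proper a},
        ∏ i, (xx l d i : ℝ) ^ (Fintype.card {v // a.1 v = i}) := sum_le_sum fun d _ => h1 d
    _ = ∑ a : {a : Fin m × Bool → Fin (k + 1) // Proper a}, ∑ d : Fin k → Fin (D + 1),
        ∏ i, (xx l d i : ℝ) ^ (Fintype.card {v // a.1 v = i}) := sum_comm
    _ ≤ ∑ a : {a : Fin m × Bool → Fin (k + 1) // Proper a},
        (Real.exp (k + 1) * Real.exp ((k + 1) * l)) *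
          ∏ i, ((Fintype.card {v // a.1 v = i}).factorial : ℝ) :=
        sum_le_sum fun a _ => h2 _
    _ = (Real.exp (k + 1) * Real.exp ((k + 1) * l)) *
        ∑ a : {a : Fin m × Bool → Fin (k + 1) // Proper a},
          ∏ i, ((Fintype.card {v // a.1 v = i}).factorial : ℝ) := by rw [mul_sum]
    _ ≤ (Real.exp (k + 1) * Real.exp ((k + 1) * l)) * (R (m + k) k * (2 ^ m * m.factorial)) := by
        gcongr
    _ = _ := by ring


lemma fact_shift (m k : ℕ) :
    ((m + k : ℕ) : ℝ) ^ k * (m.factorial : ℝ) ≤ Real.exp k * ((m + k).factorial : ℝ) := by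
  induction k with
  | zero => simp
  | succ k ih =>
    have h1 : ((m + (k + 1) : ℕ) : ℝ) ^ k ≤ Real.exp 1 * ((m + k : ℕ) : ℝ) ^ k := by
      rcases Nat.eq_zero_or_pos k with rfl | hk
      · simp
      · have hp : (0 : ℝ) < ((m + k : ℕ) : ℝ) := by exact_mod_cast (by omega : 0 < m + k)
        have h2 : ((m + (k + 1) : ℕ) : ℝ) ≤ Real.exp (1 / ((m + k : ℕ) : ℝ)) * ((m + k : ℕ) : ℝ) := by
          have := Real.add_one_le_exp (1 / ((m + k : ℕ) : ℝ))
          calc ((m + (k + 1) : ℕ) : ℝ) = (1 / ((m + k : ℕ) : ℝ) + 1) * ((m + k : ℕ) : ℝ) := by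
                field_simp; push_cast; ring
            _ ≤ _ := by gcongr
        calc ((m + (k + 1) : ℕ) : ℝ) ^ k
            ≤ (Real.exp (1 / ((m + k : ℕ) : ℝ)) * ((m + k : ℕ) : ℝ)) ^ k := by gcongr
          _ = Real.exp (k * (1 / ((m + k : ℕ) : ℝ))) * ((m + k : ℕ) : ℝ) ^ k := by
              rw [mul_pow, ← Real.exp_nat_mul]
          _ ≤ _ := by
              gcongr
              rw [mul_one_div, div_le_one hp]
              push_cast
              have : (0 : ℝ) ≤ m := by positivity
              linarith
    rw [pow_succ, ← Nat.add_assoc, Nat.factorial_succ, Nat.add_assoc]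
    push_cast at h1 ih ⊢
    rw [Real.exp_add]
    calc ((m : ℝ) + (k + 1)) ^ k * (m + (k + 1)) * m.factorial
        ≤ (Real.exp 1 * ((m : ℝ) + k) ^ k) * (m + (k + 1)) * m.factorial := by gcongr
      _ = Real.exp 1 * (m + (k + 1)) * (((m : ℝ) + k) ^ k * m.factorial) := by ring
      _ ≤ Real.exp 1 * (m + (k + 1)) * (Real.exp k * (m + k).factorial) := by gcongr
      _ = _ := by ring

lemma fact_le (n : ℕ) (hn : 1 ≤ n) :
    (n.factorial : ℝ) ≤ Real.exp ((n + 1) * Real.log n + 1 - n) := by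
  induction n, hn using Nat.le_induction with
  | base => simp
  | succ n hn ih =>
    have hp : (0 : ℝ) < n := by exact_mod_cast hn
    rw [Nat.factorial_succ]
    push_cast
    have h0 : ((n : ℝ) + 1) = Real.exp (Real.log (n + 1)) := (Real.exp_log (by positivity)).symm
    have h1 : (n + 1) * Real.log n + 1 ≤ (n + 1) * Real.log (n + 1) := by
      have h2 := Real.one_sub_inv_le_log_of_pos (show (0 : ℝ) < (n + 1) / n by positivity)
      rw [Real.log_div (by positivity) (by positivity)] at h2
      have h3 : 1 - ((n + 1 : ℝ) / n)⁻¹ = 1 / (n + 1) := by field_simp; ring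
      rw [h3, div_le_iff₀ (by positivity)] at h2
      linarith
    calc ((n : ℝ) + 1) * n.factorial
        ≤ Real.exp (Real.log (n + 1)) * Real.exp ((n + 1) * Real.log n + 1 - n) := by
          rw [← h0]; gcongr
      _ = Real.exp (Real.log (n + 1) + ((n + 1) * Real.log n + 1 - n)) := by rw [Real.exp_add]
      _ ≤ _ := by
          apply Real.exp_le_exp.2
          linarith

lemma R_upper_exp (n k : ℕ) (hk1 : 1 ≤ k) (hk : k ≤ n) :
    (R n k : ℝ) ≤ Real.exp ((n * Real.log (2 * n) - n) + Real.log n + 2 + 2 * k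
      - k * Real.log k - n / (k + 1)) := by
  have hkp : (0 : ℝ) < k := by exact_mod_cast hk1
  have hnp : (0 : ℝ) < n := by exact_mod_cast (by omega : 0 < n)
  have h1 := R_upper n k hk
  have h2 : ((2 * n).choose k : ℝ) ≤ (2 * n : ℝ) ^ k / k.factorial := by
    have := Nat.choose_le_pow_div (α := ℝ) k (2 * n)
    exact_mod_cast this
  have h3 : (n : ℝ) ^ k * ((n - k).factorial : ℝ) ≤ Real.exp k * (n.factorial : ℝ) := by
    have := fact_shift (n - k) k
    rwa [Nat.sub_add_cancel hk] at this
  have h4 : ((k : ℝ) / (k + 1)) ^ (n - k) ≤ Real.exp (1 - n / (k + 1)) := by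
    have h5 : (k : ℝ) / (k + 1) ≤ Real.exp (-(1 / (k + 1))) := by
      have := Real.add_one_le_exp (-(1 / ((k : ℝ) + 1)))
      have h6 : (k : ℝ) / (k + 1) = -(1 / ((k : ℝ) + 1)) + 1 := by field_simp; ring
      rw [h6]; exact this
    calc ((k : ℝ) / (k + 1)) ^ (n - k) ≤ (Real.exp (-(1 / (k + 1)))) ^ (n - k) := by gcongr
      _ = Real.exp (((n - k : ℕ) : ℝ) * (-(1 / (k + 1)))) := by rw [← Real.exp_nat_mul]
      _ ≤ _ := by
        apply Real.exp_le_exp.2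
        rw [Nat.cast_sub hk]
        have : ((n : ℝ) - k) * (-(1 / (k + 1))) = k / (k + 1) - n / (k + 1) := by field_simp; ring
        rw [this]
        have : (k : ℝ) / (k + 1) ≤ 1 := by rw [div_le_one (by positivity)]; linarith
        linarith
  have h5 : (1 : ℝ) / k.factorial ≤ Real.exp (k - k * Real.log k) := by
    have := Real.pow_div_factorial_le_exp (k : ℝ) hkp.le k
    rw [Real.exp_sub, mul_comm, Real.exp_mul, Real.exp_log hkp, Real.rpow_natCast,
      le_div_iff₀ (by positivity)]
    rw [div_mul_eq_mul_div, one_mul]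
    exact this
  have h6 := fact_le n (by omega)
  have h7 : (2 : ℝ) ^ n = Real.exp (n * Real.log 2) := by
    rw [mul_comm, Real.exp_mul, Real.exp_log (by norm_num), Real.rpow_natCast]
  calc (R n k : ℝ) ≤ _ := h1
    _ ≤ ((2 * n : ℝ) ^ k / k.factorial) * (2 ^ (n - k) * ((n - k).factorial : ℝ) *
        Real.exp (1 - n / (k + 1))) := by gcongr
    _ = (2 : ℝ) ^ n * (1 / k.factorial) * ((n : ℝ) ^ k * ((n - k).factorial : ℝ)) *
        Real.exp (1 - n / (k + 1)) := by
        have : (2 : ℝ) ^ n = 2 ^ k * 2 ^ (n - k) := by rw [← pow_add]; congr 1; omega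
        rw [this, mul_pow]; ring
    _ ≤ (2 : ℝ) ^ n * Real.exp (k - k * Real.log k) *
        (Real.exp k * Real.exp ((n + 1) * Real.log n + 1 - n)) * Real.exp (1 - n / (k + 1)) := by
        have h8 := h3.trans (mul_le_mul_of_nonneg_left h6 (Real.exp_pos k).le)
        exact mul_le_mul_of_nonneg_right (mul_le_mul (mul_le_mul_of_nonneg_left h5 (by positivity))
          h8 (by positivity) (by positivity)) (Real.exp_pos _).le
    _ = _ := by
        rw [h7, ← Real.exp_add, ← Real.exp_add, ← Real.exp_add, ← Real.exp_add,
          Real.log_mul (by norm_num) hnp.ne']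
        congr 1
        ring

lemma R_lower_arith (m k N Q LS Lt Lm L1 le lk l2 : ℝ)
    (h1 : k * (le + N - l2 - lk) ≤ k * L1) (h2 : 2 * m * (l2 + Lm) - 2 * (k + 1) ≤ m * (2 * LS))
    (h3 : -Q ≤ m * Lt) (h4 : m * N - k ≤ m * Lm) (h5 : Lm ≤ N) (h6 : k * l2 ≤ k) (h7 : 7 ≤ k) :
    (m + k) * (l2 + N) - (m + k) - k * lk + k * le - 6 * k - 4 - N - Q ≤
      k * L1 + m * (2 * LS + Lt) -
        (m * l2 + ((m + 1) * Lm + 1 - m) + (k + 1) + 2 * m) := by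
  ring_nf at *
  linarith

set_option maxHeartbeats 1600000 in
lemma R_lower_exp (n k : ℕ) (e : ℝ) (he : 0 < e) (he1 : e ≤ 1) (hk : 7 ≤ k) (hn : 10 * k ≤ n) :
    Real.exp ((n * Real.log (2 * n) - n) - k * Real.log k + k * Real.log e - 6 * k - 4
      - Real.log n - (1 + e) ^ 2 * (n / (k - 3))) ≤ R n k := by
  obtain ⟨m, rfl⟩ : ∃ m, n = m + k := ⟨n - k, by omega⟩
  set l := 2 * m / (k + 1) with hl
  set D := ⌊e * l⌋₊ with hD
  have hkR : (7 : ℝ) ≤ k := by exact_mod_cast hk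
  have hmk : (9 : ℝ) * k ≤ m := by exact_mod_cast (by omega : 9 * k ≤ m)
  have hmp : (0 : ℝ) < m := by linarith
  have hl0 : (0 : ℝ) ≤ l := by positivity
  have hDle : (D : ℝ) ≤ e * l := Nat.floor_le (by positivity)
  have hDge : e * l ≤ (D : ℝ) + 1 := (Nat.lt_floor_add_one _).le
  have hDl : D ≤ l := by
    have : (D : ℝ) ≤ l := hDle.trans (by nlinarith)
    exact_mod_cast this
  set S : ℝ := (k + 1) * l with hS
  have hS2 : S ≤ 2 * m := by
    have := Nat.mul_div_le (2 * m) (k + 1)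
    rw [hS, hl]; exact_mod_cast this
  have hS1 : 2 * m - (k + 1) ≤ S := by
    have h1 := Nat.div_add_mod (2 * m) (k + 1)
    have h2 := Nat.mod_lt (2 * m) (show 0 < k + 1 by omega)
    rw [← hl] at h1
    have h3 : 2 * m ≤ (k + 1) * l + (k + 1) := by omega
    have h4 : (2 * m : ℝ) ≤ (k + 1) * l + (k + 1) := by exact_mod_cast h3
    linarith
  have hSn : ((m + k : ℕ) : ℝ) ≤ S := by push_cast; linarith
  have hSp : 0 < S := by push_cast at hSn; linarith
  set t : ℝ := (1 + e) ^ 2 / (k + 1) with ht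
  have he4 : (1 + e) ^ 2 ≤ 4 := by nlinarith
  have ht0 : 0 ≤ t := by positivity
  have ht1 : t ≤ 1 / 2 := by
    rw [ht, div_le_iff₀ (by positivity)]; linarith
  have hbase : S ^ 2 * (1 - t) ≤ ((k + 1 : ℝ) * l) ^ 2 - (k + 1) * (l + D : ℝ) ^ 2 := by
    have h1 : (l + D : ℝ) ^ 2 ≤ (1 + e) ^ 2 * l ^ 2 := by
      rw [← mul_pow]
      apply pow_le_pow_left₀ (by positivity)
      linarith
    have h2 : S ^ 2 * (1 - t) = ((k + 1 : ℝ) * l) ^ 2 - (k + 1) * ((1 + e) ^ 2 * l ^ 2) := by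
      rw [hS, ht]; field_simp
    rw [h2]
    have := mul_le_mul_of_nonneg_left h1 (show (0 : ℝ) ≤ k + 1 by positivity)
    linarith
  have h1t : 0 < 1 - t := by linarith
  have hb0 : 0 < S ^ 2 * (1 - t) := by positivity
  have key := R_lower m k l D hDl (hb0.le.trans hbase)
  have hlp : (0 : ℝ) < l := by
    rw [hS] at hSp
    by_contra h
    have : (l : ℝ) = 0 := le_antisymm (not_lt.1 h) hl0
    rw [this] at hSp; simp at hSp
  have hel : e * l = e * S / (k + 1) := by rw [hS]; field_simp
  have hkey2 : (e * S / (k + 1)) ^ k * (S ^ 2 * (1 - t)) ^ m ≤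
      R (m + k) k * (2 ^ m * m.factorial) * (Real.exp (k + 1) * Real.exp S) := by
    refine le_trans ?_ key
    rw [← hel]
    gcongr
  have hfm := fact_le m (by have : 0 < m := by exact_mod_cast hmp
                            omega)
  have h2m : (2 : ℝ) ^ m = Real.exp (m * Real.log 2) := by
    rw [mul_comm, Real.exp_mul, Real.exp_log (by norm_num), Real.rpow_natCast]
  have hkey3 : (e * S / (k + 1)) ^ k * (S ^ 2 * (1 - t)) ^ m ≤
      R (m + k) k * Real.exp (m * Real.log 2 + ((m + 1) * Real.log m + 1 - m) + (k + 1) + 2 * m) := by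
    refine hkey2.trans ?_
    have hE : Real.exp (m * Real.log 2 + ((m + 1) * Real.log m + 1 - m) + (k + 1) + 2 * m) =
        2 ^ m * Real.exp ((m + 1) * Real.log m + 1 - m) *
          (Real.exp (k + 1) * Real.exp (2 * m)) := by
      rw [h2m, ← Real.exp_add, ← Real.exp_add, ← Real.exp_add]
      congr 1; ring
    rw [hE, mul_assoc]
    refine mul_le_mul_of_nonneg_left ?_ (Nat.cast_nonneg _)
    refine mul_le_mul (mul_le_mul_of_nonneg_left hfm (by positivity))
      (mul_le_mul_of_nonneg_left (Real.exp_le_exp.2 hS2) (Real.exp_pos _).le)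
      (by positivity) (by positivity)
  -- logarithms
  have hleft : (e * S / (k + 1)) ^ k * (S ^ 2 * (1 - t)) ^ m =
      Real.exp (k * Real.log (e * S / (k + 1)) + m * (2 * Real.log S + Real.log (1 - t))) := by
    rw [Real.exp_add, mul_comm (k : ℝ), mul_comm (m : ℝ), Real.exp_mul, Real.exp_mul,
      Real.exp_log (by positivity), Real.exp_add, mul_comm (2 : ℝ), Real.exp_mul,
      Real.exp_log hSp, Real.exp_log h1t, Real.rpow_natCast, Real.rpow_natCast]
    norm_num
  have hn0 : (0 : ℝ) < ((m + k : ℕ) : ℝ) := by push_cast; linarith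
  have hlogS : Real.log 2 + Real.log m - (k + 1) / m ≤ Real.log S := by
    have hu : (k + 1 : ℝ) / (2 * m) ≤ 1 / 2 := by
      rw [div_le_iff₀ (by positivity)]; linarith
    have hu0 : 0 ≤ (k + 1 : ℝ) / (2 * m) := by positivity
    set u := (k + 1 : ℝ) / (2 * m) with hu'
    have h1 : 2 * m * (1 - u) ≤ S := by
      have : 2 * m * (1 - u) = 2 * m - (k + 1) := by rw [hu']; field_simp
      rw [this]; exact hS1
    have h2 := Real.log_le_log (by have : 0 < 1 - u := by linarith
                                   positivity) h1
    rw [Real.log_mul (by positivity) (by linarith), Real.log_mul (by norm_num) hmp.ne'] at h2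
    have h3 := Real.one_sub_inv_le_log_of_pos (show 0 < 1 - u by linarith)
    have h4 : (1 - u)⁻¹ ≤ 1 + 2 * u := by
      rw [inv_le_iff_one_le_mul₀ (by linarith)]
      have := mul_nonneg hu0 (show 0 ≤ 1 - 2 * u by linarith)
      linarith
    have h5 : (k + 1 : ℝ) / m = 2 * u := by rw [hu']; field_simp
    rw [h5]; linarith
  have hlogS' : 2 * m * (Real.log 2 + Real.log m) - 2 * (k + 1) ≤ m * (2 * Real.log S) := by
    have h1 := mul_le_mul_of_nonneg_left hlogS hmp.le
    have h2 : m * (Real.log 2 + Real.log m - (k + 1) / m) =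
      m * (Real.log 2 + Real.log m) - (k + 1) := by field_simp
    rw [h2] at h1; linarith
  have hlog1 : Real.log e + Real.log ((m + k : ℕ) : ℝ) - Real.log 2 - Real.log k ≤
      Real.log (e * S / (k + 1)) := by
    have h1 : e * ((m + k : ℕ) : ℝ) / (2 * k) ≤ e * S / (k + 1) := by
      gcongr
      linarith
    have h2 := Real.log_le_log (by positivity) h1
    rw [Real.log_div (by positivity) (by positivity), Real.log_mul (by positivity) (by positivity),
      Real.log_mul (by positivity) (by positivity)] at h2
    linarith
  have hlog1' := mul_le_mul_of_nonneg_left hlog1 (show (0 : ℝ) ≤ k by positivity)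
  have hlogt : -((1 + e) ^ 2 * (((m + k : ℕ) : ℝ) / (k - 3))) ≤ m * Real.log (1 - t) := by
    have h1 := Real.one_sub_inv_le_log_of_pos h1t
    have h2 : 1 - (1 - t)⁻¹ = -((1 + e) ^ 2 / (k + 1 - (1 + e) ^ 2)) := by
      have h0 : (k : ℝ) + 1 - (1 + e) ^ 2 ≠ 0 := by
        have : 0 < (k : ℝ) + 1 - (1 + e) ^ 2 := by linarith
        exact this.ne'
      have h3 : 1 - t = (k + 1 - (1 + e) ^ 2) / (k + 1) := by rw [ht]; field_simp
      rw [h3, inv_div]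
      field_simp
      ring
    have h3 : (1 + e) ^ 2 / (k + 1 - (1 + e) ^ 2) ≤ (1 + e) ^ 2 / (k - 3) := by
      apply div_le_div_of_nonneg_left (by positivity) (by linarith) (by linarith)
    have h4 : -((1 + e) ^ 2 / (k - 3)) ≤ Real.log (1 - t) := by rw [h2] at h1; linarith
    have h5 := mul_le_mul_of_nonneg_left h4 hmp.le
    refine le_trans ?_ h5
    have h6 : (0 : ℝ) ≤ (1 + e) ^ 2 / (k - 3) := div_nonneg (by positivity) (by linarith)
    push_cast
    have h7 : (1 + e) ^ 2 * (((m : ℝ) + k) / (k - 3)) = (m + k) * ((1 + e) ^ 2 / (k - 3)) := by ring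
    rw [h7]
    have := mul_nonneg (show (0 : ℝ) ≤ k by linarith) h6
    linarith
  have hlogm : m * Real.log ((m + k : ℕ) : ℝ) - k ≤ m * Real.log m := by
    have h1 := Real.one_sub_inv_le_log_of_pos (show 0 < (m : ℝ) / ((m + k : ℕ) : ℝ) by positivity)
    rw [Real.log_div hmp.ne' hn0.ne', inv_div] at h1
    have h2 := mul_le_mul_of_nonneg_left h1 hmp.le
    have h3 : m * (1 - ((m + k : ℕ) : ℝ) / m) = -(k : ℝ) := by
      push_cast; field_simp; ring
    rw [h3] at h2
    linarith
  have hlogm2 : Real.log m ≤ Real.log ((m + k : ℕ) : ℝ) :=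
    Real.log_le_log hmp (by push_cast; linarith)
  have hlog2 : Real.log 2 ≤ 1 := by have := Real.log_two_lt_d9; linarith
  have hlog2k : k * Real.log 2 ≤ k := mul_le_of_le_one_right (by linarith) hlog2
  rw [hleft] at hkey3
  have hfin := (div_le_iff₀ (Real.exp_pos _)).2 hkey3
  rw [← Real.exp_sub] at hfin
  refine le_trans (Real.exp_le_exp.2 ?_) hfin
  rw [Real.log_mul (by norm_num) hn0.ne']
  have hc : ((m + k : ℕ) : ℝ) = m + k := by push_cast; ring
  have := R_lower_arith _ _ _ _ _ _ _ _ _ _ _ hlog1' hlogS' hlogt hlogm hlogm2 hlog2k hkR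
  refine le_trans (le_of_eq ?_) this
  rw [hc]

lemma lower_G (n : ℕ) (e T k0 : ℝ) (he : 0 < e) (he1 : e ≤ 1) (hk0 : 4 ≤ k0)
    (hL : 0 ≤ Real.log n) (hT0 : 0 ≤ T)
    (hT : k0 * T = n) (hkL : k0 * Real.log n = 2 * T) (hs : (k0 + 4) ^ 2 ≤ n)
    (h10 : 10 * (k0 + 4) ≤ n)
    (hsmall : (6 - Real.log e) * (k0 + 4) + 4 + 3 * Real.log n ≤ e * T) :
    ∃ k, 1 ≤ k ∧ k ≤ n ∧ Real.exp ((n * Real.log (2 * n) - n) - (2 + 4 * e) * T) ≤ R n k := by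
  have hc1 := Nat.le_ceil k0
  have hc2 := (Nat.ceil_lt_add_one (show 0 ≤ k0 by linarith)).le
  obtain ⟨k, hk⟩ : ∃ k, k = ⌈k0⌉₊ + 3 := ⟨_, rfl⟩
  have hkR : (k : ℝ) = ⌈k0⌉₊ + 3 := by rw [hk]; push_cast; ring
  have hk1 : k0 + 3 ≤ k := by linarith
  have hk2 : (k : ℝ) ≤ k0 + 4 := by linarith
  have hk7 : 7 ≤ k := by
    have : (7 : ℝ) ≤ k := by linarith
    exact_mod_cast this
  have hkn : 10 * k ≤ n := by
    have : (10 : ℝ) * k ≤ n := by linarith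
    exact_mod_cast this
  refine ⟨k, by omega, by omega, le_trans (Real.exp_le_exp.2 ?_) (R_lower_exp n k e he he1 hk7 hkn)⟩
  have hkp : (0 : ℝ) < k := by linarith
  have hlogk : Real.log k ≤ Real.log n / 2 := by
    have h1 : (k : ℝ) ^ 2 ≤ n := le_trans (by gcongr) hs
    have h2 := Real.log_le_log (by positivity) h1
    rw [Real.log_pow] at h2
    push_cast at h2
    linarith
  have h1 : k * Real.log k ≤ T + 2 * Real.log n := by
    have : k * Real.log k ≤ (k0 + 4) * (Real.log n / 2) := by
      have := Real.log_nonneg (show (1 : ℝ) ≤ k by linarith)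
      gcongr
    linarith
  have hle : Real.log e ≤ 0 := Real.log_nonpos he.le he1
  have h2 : (k0 + 4) * Real.log e ≤ k * Real.log e := by nlinarith
  have h3 : (n : ℝ) / (k - 3) ≤ T := by
    rw [div_le_iff₀ (by linarith), ← hT, mul_comm]
    gcongr
    linarith
  have h4 : (1 + e) ^ 2 * ((n : ℝ) / (k - 3)) ≤ (1 + 3 * e) * T := by
    have : (1 + e) ^ 2 ≤ 1 + 3 * e := by nlinarith
    exact mul_le_mul this h3 (div_nonneg (by positivity) (by linarith)) (by positivity)
  nlinarith

lemma ygap (y h : ℝ) (hy : 0 < y) (h0 : 0 < h) (h1 : h ≤ 1) (hb : h < |y - 1|) :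
    2 + h ^ 2 / 2 ≤ y + 1 / y := by
  have hsq : h ^ 2 ≤ (y - 1) ^ 2 := by
    rw [← sq_abs (y - 1)]; gcongr
  have key : (2 + h ^ 2 / 2) * y ≤ y * y + 1 := by
    rcases le_or_gt y 2 with h2 | h2
    · nlinarith [sq_nonneg h]
    · have : h ^ 2 ≤ 1 := by nlinarith
      nlinarith
  have : y + 1 / y = (y * y + 1) / y := by field_simp
  rw [this, le_div_iff₀ hy]
  exact key

lemma upper_G (n k : ℕ) (h d T k0 s : ℝ) (h0 : 0 < h) (h1 : h ≤ 1) (hd : d = h ^ 2 / 32)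
    (hk1 : 1 ≤ k) (hkn : k ≤ n)
    (hk0 : 0 < k0) (hL : 0 ≤ Real.log n) (hT0 : 0 ≤ T) (hs0 : 0 < s)
    (hs : s * s = n) (hsT : T = s * Real.sqrt (Real.log n / 2))
    (hT : k0 * T = n) (hkL : k0 * Real.log n = 2 * T)
    (hexp : 3 * Real.sqrt (Real.log n / 2) ≤
      Real.exp (d * Real.log n) / (2 * Real.exp 2) - 2 * Real.exp 2)
    (hb : h < |((k : ℝ) + 1) / k0 - 1|) :
    (R n k : ℝ) ≤ Real.exp ((n * Real.log (2 * n) - n) - (2 + h ^ 2 / 4) * T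
      + 2 * Real.log n + 2) := by
  refine (R_upper_exp n k hk1 hkn).trans (Real.exp_le_exp.2 ?_)
  have hkp : (1 : ℝ) ≤ k := by exact_mod_cast hk1
  have hh2 : h ^ 2 ≤ 1 := pow_le_one₀ h0.le h1
  set L := Real.log n with hLdef
  suffices hmain : (2 + h ^ 2 / 4) * T ≤ k * Real.log k - 2 * k + n / (k + 1) + L / 2 by linarith
  rcases le_or_gt ((1 / 2 - d) * L) (Real.log k - 2) with hc | hc
  · set y := ((k : ℝ) + 1) / k0 with hy
    have hyp : 0 < y := by positivity
    have hg := ygap y h hyp h0 h1 hb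
    have hky : (k : ℝ) = y * k0 - 1 := by rw [hy]; field_simp; ring
    have e1 : (n : ℝ) / (k + 1) = T * (1 / y) := by
      rw [hy, ← hT]; field_simp
    have e2 : (1 - 2 * d) * (y * T - L / 2) ≤ k * Real.log k - 2 * k := by
      have := mul_le_mul_of_nonneg_left hc (show (0 : ℝ) ≤ k by linarith)
      have e3 : k * ((1 / 2 - d) * L) = (1 - 2 * d) * (y * T - L / 2) := by
        have : y * (k0 * L) = y * (2 * T) := by rw [hkL]
        rw [hky]
        linear_combination (1 / 2 - d) * this
      rw [e3] at this
      linarith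
    rw [e1]
    have hd0 : 0 ≤ d := by rw [hd]; positivity
    have hd1 : 2 * d ≤ 1 := by rw [hd]; linarith
    have e4 : (1 - 2 * d) * (T * (1 / y)) ≤ T * (1 / y) := by
      have : 0 ≤ T * (1 / y) := by positivity
      nlinarith
    have e5 : (1 - 2 * d) * (T * (2 + h ^ 2 / 2)) ≤ (1 - 2 * d) * (T * (y + 1 / y)) := by
      have : 0 ≤ 1 - 2 * d := by linarith
      gcongr
    have e6 : (1 - 2 * d) * (L / 2) ≤ L / 2 := by nlinarith
    have e7 : (2 + h ^ 2 / 4) * T ≤ (1 - 2 * d) * (T * (2 + h ^ 2 / 2)) := by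
      have : 2 + h ^ 2 / 4 ≤ (1 - 2 * d) * (2 + h ^ 2 / 2) := by
        rw [hd]; nlinarith [sq_nonneg h]
      nlinarith
    linarith
  · set X := Real.exp (d * L) with hX
    set E := Real.exp 2 with hE
    have hEp : 0 < E := Real.exp_pos _
    have hXp : 0 < X := Real.exp_pos _
    have hd0 : 0 ≤ d := by rw [hd]; positivity
    have hX1 : 1 ≤ X := Real.one_le_exp (by positivity)
    have hkX : k * X ≤ E * s := by
      have hls : Real.log s = L / 2 := by
        rw [hLdef, ← hs, Real.log_mul hs0.ne' hs0.ne']; ring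
      rw [← Real.exp_log (show (0 : ℝ) < k by linarith), ← Real.exp_log hs0, hX, hE,
        ← Real.exp_add, ← Real.exp_add]
      apply Real.exp_le_exp.2
      rw [hls]
      linarith
    have f1 : s * (X / (2 * E)) ≤ n / (k + 1) := by
      rw [← hs, le_div_iff₀ (by linarith)]
      have : s * (X / (2 * E)) * (k + 1) = s * ((k * X + X) / (2 * E)) := by ring
      rw [this]
      gcongr
      rw [div_le_iff₀ (by positivity)]
      nlinarith
    have f2 : (k : ℝ) ≤ E * s := by nlinarith
    have f3 : 0 ≤ k * Real.log k := by
      have := Real.log_nonneg hkp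
      positivity
    have f4 : 3 * T ≤ s * (X / (2 * E) - 2 * E) := by
      have := mul_le_mul_of_nonneg_left hexp hs0.le
      rw [hsT]
      linarith
    have f5 : (2 + h ^ 2 / 4) * T ≤ 3 * T := by gcongr; linarith
    rw [mul_sub] at f4
    linarith

lemma mean_G (n : ℕ) (a : ℕ → ℝ) (h k0 : ℝ) (hn : 1 ≤ n) (ha : ∀ k, 0 ≤ a k) (hk0 : 1 ≤ k0)
    (h0 : 0 ≤ h) (hW : 0 < ∑ k ∈ Finset.Icc 1 n, a k)
    (hab : ∀ k ∈ Finset.Icc 1 n, |((k : ℝ) + 1) / k0 - 1| ≤ h ∨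
      a k * (n : ℝ) ^ 3 ≤ ∑ k ∈ Finset.Icc 1 n, a k) :
    |(∑ k ∈ Finset.Icc 1 n, (k : ℝ) * a k) / (∑ k ∈ Finset.Icc 1 n, a k) * k0⁻¹ - 1| ≤
      h + 1 / k0 + 1 / n := by
  set W := ∑ k ∈ Finset.Icc 1 n, a k with hWd
  have hnR : (1 : ℝ) ≤ n := by exact_mod_cast hn
  have hk0p : 0 < k0 := by linarith
  have e1 : (∑ k ∈ Finset.Icc 1 n, (k : ℝ) * a k) / W * k0⁻¹ - 1 =
      (∑ k ∈ Finset.Icc 1 n, ((k : ℝ) / k0 - 1) * a k) / W := by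
    have : ∑ k ∈ Finset.Icc 1 n, ((k : ℝ) / k0 - 1) * a k =
        (∑ k ∈ Finset.Icc 1 n, (k : ℝ) * a k) * k0⁻¹ - W := by
      rw [hWd, Finset.sum_mul, ← Finset.sum_sub_distrib]
      apply Finset.sum_congr rfl
      intro k _
      ring
    rw [this]
    field_simp
  rw [e1, abs_div, abs_of_pos hW, div_le_iff₀ hW]
  refine (Finset.abs_sum_le_sum_abs _ _).trans ?_
  have key : ∀ k ∈ Finset.Icc 1 n, |((k : ℝ) / k0 - 1) * a k| ≤
      (h + 1 / k0) * a k + W / (n : ℝ) ^ 2 := by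
    intro k hk
    obtain ⟨hk1, hk2⟩ := Finset.mem_Icc.1 hk
    have hk1R : (1 : ℝ) ≤ k := by exact_mod_cast hk1
    have hk2R : (k : ℝ) ≤ n := by exact_mod_cast hk2
    rw [abs_mul, abs_of_nonneg (ha k)]
    rcases hab k hk with hg | hg
    · have : |(k : ℝ) / k0 - 1| ≤ h + 1 / k0 := by
        have e : (k : ℝ) / k0 - 1 = (((k : ℝ) + 1) / k0 - 1) - 1 / k0 := by ring
        rw [e]
        refine (abs_sub _ _).trans ?_
        rw [abs_of_pos (show 0 < 1 / k0 by positivity)]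
        linarith
      have h2 : 0 ≤ W / (n : ℝ) ^ 2 := by positivity
      have := mul_le_mul_of_nonneg_right this (ha k)
      linarith
    · have h1 : |(k : ℝ) / k0 - 1| ≤ n := by
        have h3 : (k : ℝ) / k0 ≤ n := by
          rw [div_le_iff₀ hk0p]; nlinarith
        have h4 : 0 ≤ (k : ℝ) / k0 := by positivity
        rw [abs_le]; constructor <;> linarith
      have h2 : n * a k ≤ W / (n : ℝ) ^ 2 := by
        rw [le_div_iff₀ (by positivity)]; linarith
      have h3 := mul_le_mul_of_nonneg_right h1 (ha k)
      have h4 : 0 ≤ (h + 1 / k0) * a k := mul_nonneg (by positivity) (ha k)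
      linarith
  refine (Finset.sum_le_sum key).trans ?_
  rw [Finset.sum_add_distrib, ← Finset.mul_sum, ← hWd]
  simp only [Finset.sum_const, Nat.card_Icc, nsmul_eq_mul, Nat.add_sub_cancel]
  apply le_of_eq
  field_simp

lemma ev_exp (b C : ℝ) (hb : 0 < b) :
    ∀ᶠ n : ℕ in Filter.atTop, C * Real.log n ≤ Real.exp (b * Real.log n) := by
  have hl : Filter.Tendsto (fun n : ℕ => Real.log n) Filter.atTop Filter.atTop :=
    Real.tendsto_log_atTop.comp tendsto_natCast_atTop_atTop
  have h1 := (tendsto_exp_mul_div_rpow_atTop 1 b hb).comp hl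
  filter_upwards [h1.eventually_ge_atTop C, hl.eventually_ge_atTop 1] with n h2 h3
  simp only [Function.comp, Real.rpow_one] at h2
  rwa [le_div_iff₀ (by linarith)] at h2

set_option maxHeartbeats 1000000 in
lemma final_G (n : ℕ) (h e : ℝ) (h0 : 0 < h) (h1 : h ≤ 1) (he : e = h ^ 2 / 32)
    (hL8 : 8 ≤ Real.log n) (hLA : 8 * (6 - Real.log e) ≤ e * Real.log n)
    (C : ℝ) (hC1 : 16 * (7 - Real.log e) ≤ e * C) (hC2 : 56 ≤ h ^ 2 * C) (hC3 : 1 ≤ h * C)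
    (hC4 : 10 ≤ C)
    (hs1 : C * Real.log n ≤ Real.exp (1 / 2 * Real.log n))
    (hX : 2 * Real.exp 2 * (2 * Real.exp 2 + 3) * Real.log n ≤ Real.exp (e * Real.log n)) :
    |meanShort n * Real.sqrt (Real.log n / (2 * (n : ℝ))) - 1| ≤ 3 * h := by
  have hn0 : n ≠ 0 := by
    rintro rfl
    simp at hL8
    linarith
  have hnp : (0 : ℝ) < n := by exact_mod_cast Nat.pos_of_ne_zero hn0
  set L := Real.log n with hLd
  set s := Real.exp (1 / 2 * L) with hs
  have hss : s * s = n := by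
    rw [hs, ← Real.exp_add]
    have : 1 / 2 * L + 1 / 2 * L = L := by ring
    rw [this, hLd, Real.exp_log hnp]
  have hsp : 0 < s := Real.exp_pos _
  set r := Real.sqrt (L / 2) with hr
  have hrr : r * r = L / 2 := Real.mul_self_sqrt (by linarith)
  have hr2 : 2 ≤ r := by
    rw [hr]; apply Real.le_sqrt_of_sq_le; linarith
  obtain ⟨T, hT⟩ : ∃ T, T = s * r := ⟨_, rfl⟩
  obtain ⟨k0, hk0⟩ : ∃ k0, k0 = s / r := ⟨_, rfl⟩
  have hrp : 0 < r := by linarith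
  have hk0p : 0 < k0 := by rw [hk0]; positivity
  have hkT : k0 * T = n := by rw [hk0, hT, ← hss]; field_simp
  have hkL : k0 * L = 2 * T := by
    have : L = 2 * (r * r) := by linarith
    rw [hk0, hT, this]; field_simp
  have hsq : Real.sqrt (L / (2 * (n : ℝ))) = k0⁻¹ := by
    rw [Real.sqrt_eq_iff_mul_self_eq (by positivity) (by positivity), hk0, ← hss]
    have : L = 2 * (r * r) := by linarith
    rw [this]; field_simp
  have hTs : s ≤ T := by rw [hT]; nlinarith
  have hTp : 0 < T := by linarith
  have hsC : C ≤ s := by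
    have := mul_le_mul_of_nonneg_left (show 1 ≤ L by linarith) (show 0 ≤ C by linarith)
    linarith
  have hk0C : 2 * C ≤ k0 := by
    have : 2 * C * L ≤ k0 * L := by rw [hkL]; linarith
    exact le_of_mul_le_mul_right this (by linarith)
  have hk0s : k0 ≤ s / 2 := by rw [hk0]; gcongr
  have hk0s4 : k0 + 4 ≤ s := by linarith
  have hns : 10 * s ≤ n := by rw [← hss]; exact mul_le_mul_of_nonneg_right (by linarith) hsp.le
  have hep : 0 < e := by rw [he]; positivity
  have hh2 : h ^ 2 ≤ 1 := pow_le_one₀ h0.le h1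
  have he1 : e ≤ 1 := by rw [he]; linarith
  have hle : Real.log e ≤ 0 := Real.log_nonpos hep.le he1
  have hCT : C * L ≤ T := by linarith
  have hsmall : (6 - Real.log e) * (k0 + 4) + 4 + 3 * L ≤ e * T := by
    have a1 : 4 * ((6 - Real.log e) * k0) ≤ e * T := by
      have b1 := mul_le_mul_of_nonneg_right hLA hk0p.le
      have b2 : e * (k0 * L) = e * (2 * T) := by rw [hkL]
      linarith
    have a2 : e * (C * L) ≤ e * T := by gcongr
    have a3 : 16 * (7 - Real.log e) * L ≤ e * C * L := by gcongr
    have a4 : (7 - Real.log e) * 1 ≤ (7 - Real.log e) * L := by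
      have : 0 ≤ 7 - Real.log e := by linarith
      gcongr
      linarith
    have a5 : 7 * L ≤ (7 - Real.log e) * L := by gcongr; linarith
    linarith
  have hgap : 5 * L + 2 ≤ h ^ 2 / 8 * T := by
    have a1 : 56 * L ≤ h ^ 2 * C * L := by gcongr
    have a2 : h ^ 2 * (C * L) ≤ h ^ 2 * T := by gcongr
    linarith
  have hexp : 3 * Real.sqrt (Real.log n / 2) ≤
      Real.exp (e * Real.log n) / (2 * Real.exp 2) - 2 * Real.exp 2 := by
    have hEp := Real.exp_pos 2
    rw [← hLd, ← hr]
    have a1 : (2 * Real.exp 2 + 3) * L ≤ Real.exp (e * L) / (2 * Real.exp 2) := by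
      rw [le_div_iff₀ (by positivity)]; linarith
    have a2 : r ≤ L := by
      have := mul_le_mul_of_nonneg_right hr2 hrp.le
      linarith
    have a3 := mul_le_mul_of_nonneg_left (show 1 ≤ L by linarith) hEp.le
    linarith
  obtain ⟨ks, hks1, hksn, hlow⟩ := lower_G n e T k0 hep he1 (by linarith) (by linarith) hTp.le hkT hkL
    (by rw [← hss, pow_two]; gcongr) (by linarith) hsmall
  have hWks : (R n ks : ℝ) ≤ ∑ k ∈ Finset.Icc 1 n, (R n k : ℝ) :=
    Finset.single_le_sum (f := fun k => (R n k : ℝ)) (fun i _ => Nat.cast_nonneg _)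
      (Finset.mem_Icc.2 ⟨hks1, hksn⟩)
  have hW : 0 < ∑ k ∈ Finset.Icc 1 n, (R n k : ℝ) :=
    lt_of_lt_of_le (Real.exp_pos _) (hlow.trans hWks)
  have hm := mean_G n (fun k => (R n k : ℝ)) h k0 (Nat.pos_of_ne_zero hn0)
    (fun k => Nat.cast_nonneg _) (by linarith) h0.le hW (by
      intro k hk
      obtain ⟨hk1, hk2⟩ := Finset.mem_Icc.1 hk
      rcases le_or_gt |((k : ℝ) + 1) / k0 - 1| h with hb | hb
      · exact Or.inl hb
      · right
        have hu := upper_G n k h e T k0 s h0 h1 he hk1 hk2 hk0p (by linarith) hTp.le hsp hss hT hkT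
          hkL hexp hb
        refine le_trans ?_ (hlow.trans hWks)
        have hn3 : (n : ℝ) ^ 3 = Real.exp (3 * L) := by
          rw [hLd, mul_comm, Real.exp_mul, Real.exp_log hnp]
          norm_cast
        rw [hn3]
        refine (mul_le_mul_of_nonneg_right hu (Real.exp_pos _).le).trans ?_
        rw [← Real.exp_add]
        apply Real.exp_le_exp.2
        have : (2 + 4 * e) * T = 2 * T + h ^ 2 / 8 * T := by rw [he]; ring
        rw [this]
        have : (2 + h ^ 2 / 4) * T = 2 * T + 2 * (h ^ 2 / 8 * T) := by ring
        rw [this]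
        linarith)
  rw [hsq]
  unfold meanShort
  refine hm.trans ?_
  have b1 : 1 / k0 ≤ h := by
    rw [div_le_iff₀ hk0p]
    have := mul_le_mul_of_nonneg_left hk0C h0.le
    linarith
  have b2 : 1 / (n : ℝ) ≤ h := by
    rw [div_le_iff₀ hnp]
    have := mul_le_mul_of_nonneg_left (show C ≤ n by linarith) h0.le
    linarith
  linarith


/-- The mean number of short chords in crystallized diagrams with `n` chords is asymptotic to
`√(2n / log n)` as `n → ∞`. -/
theorem meanShort_asymptotic :
    Filter.Tendsto (fun n : ℕ => meanShort n * Real.sqrt (Real.log n / (2 * (n : ℝ))))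
      Filter.atTop (nhds 1) := by
  rw [Metric.tendsto_atTop']
  intro ε hε
  obtain ⟨h, hh⟩ : ∃ h, h = min 1 (ε / 4) := ⟨_, rfl⟩
  have h0 : 0 < h := by rw [hh]; positivity
  have h1 : h ≤ 1 := by rw [hh]; exact min_le_left _ _
  have h3 : h ≤ ε / 4 := by rw [hh]; exact min_le_right _ _
  obtain ⟨e, he⟩ : ∃ e, e = h ^ 2 / 32 := ⟨_, rfl⟩
  have hep : 0 < e := by rw [he]; positivity
  have hle : Real.log e ≤ 0 := Real.log_nonpos hep.le (by rw [he]; nlinarith)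
  obtain ⟨C, hC⟩ : ∃ C, C = max (max (16 * (7 - Real.log e) / e) (56 / h ^ 2)) (max (1 / h) 10) :=
    ⟨_, rfl⟩
  have hC1 : 16 * (7 - Real.log e) ≤ e * C := by
    have : 16 * (7 - Real.log e) / e ≤ C := by rw [hC]; simp
    rw [div_le_iff₀ hep] at this; linarith
  have hC2 : 56 ≤ h ^ 2 * C := by
    have : 56 / h ^ 2 ≤ C := by rw [hC]; simp
    rw [div_le_iff₀ (by positivity)] at this; linarith
  have hC3 : 1 ≤ h * C := by
    have : 1 / h ≤ C := by rw [hC]; simp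
    rw [div_le_iff₀ (by positivity)] at this; linarith
  have hC4 : 10 ≤ C := by rw [hC]; simp
  have hl : Filter.Tendsto (fun n : ℕ => Real.log n) Filter.atTop Filter.atTop :=
    Real.tendsto_log_atTop.comp tendsto_natCast_atTop_atTop
  have hev : ∀ᶠ n : ℕ in Filter.atTop,
      |meanShort n * Real.sqrt (Real.log n / (2 * (n : ℝ))) - 1| ≤ 3 * h := by
    filter_upwards [hl.eventually_ge_atTop 8,
      hl.eventually_ge_atTop (8 * (6 - Real.log e) / e), ev_exp (1 / 2) C (by norm_num),
      ev_exp e (2 * Real.exp 2 * (2 * Real.exp 2 + 3)) hep] with n a1 a2 a3 a4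
    rw [div_le_iff₀ hep] at a2
    exact final_G n h e h0 h1 he a1 (by linarith) C hC1 hC2 hC3 hC4 a3 a4
  obtain ⟨N, hN⟩ := Filter.eventually_atTop.1 hev
  refine ⟨N, fun n hn => ?_⟩
  rw [Real.dist_eq]
  have := hN n (le_of_lt hn)
  linarith

end ChordBubbles
end
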